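/- arXiv:1708.03876 — 2 statements merged into one kernel-verified Lean document; each statement's English description precedes it below -/
import Mathlib

section
/- Let a be a ribbon with n ≥ 4 nodes, all of which are positive. Then β(a) = δ(a): every extension of a attains at least δ(a) distinct values on its critical set in the open unit disk, and some extension of a attains exactly δ(a) distinct critical values. -/
open scoped RealInnerProductSpace

noncomputable section

abbrev E2 : Type := EuclideanSpace ℝ (Fin 2)

/-- The point (cos t, sin t) on the unit circle in ℝ². -/
def sphPt (t : ℝ) : E2 := (EuclideanSpace.equiv (Fin 2) ℝ).symm ![Real.cos t, Real.sin t]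

/-- A ribbon with `n` nodes, encoded via the angle parametrization `g = φ ∘ (cos, sin)`
of a C^∞ function `φ : S¹ → ℝ` whose critical points on the circle are exactly the `n`
nondegenerate local extrema (nodes) at angles `θ 0 < θ 1 < ⋯ < θ (n-1)` in `[0, 2π)`,
with pairwise distinct critical values, together with a marking `ν` of the nodes by `±1`. -/
structure Ribbon (n : ℕ) : Type where
  g : ℝ → ℝ
  θ : Fin n → ℝ
  ν : Fin n → ℤ
  n_even : Even n
  n_pos : 0 < n
  smooth_g : ContDiff ℝ (⊤ : ℕ∞) g
  periodic_g : Function.Periodic g (2 * Real.pi)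
  theta_mem : ∀ i, θ i ∈ Set.Ico (0 : ℝ) (2 * Real.pi)
  theta_mono : StrictMono θ
  node_crit : ∀ i, deriv g (θ i) = 0
  node_nondeg : ∀ i, deriv (deriv g) (θ i) ≠ 0
  crit_only : ∀ t ∈ Set.Ico (0 : ℝ) (2 * Real.pi), deriv g t = 0 → ∃ i, t = θ i
  values_distinct : ∀ i j, g (θ i) = g (θ j) → i = j
  nu_sign : ∀ i, ν i = 1 ∨ ν i = -1

/-- The signature σ = s₊ − s₋ of a ribbon. -/
def Ribbon.sigma {n : ℕ} (a : Ribbon n) : ℤ := ∑ i, a.ν i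

/-- Critical points of `f` in the open unit disk. -/
def critPts (f : E2 → ℝ) : Set E2 :=
  {x | x ∈ Metric.ball (0 : E2) 1 ∧ fderiv ℝ f x = 0}

/-- `f : ℝ² → ℝ` is an extension of the ribbon `a`: it is C^∞, agrees with `φ` on the unit
circle, has nowhere-vanishing gradient on the circle, and at each node the radial derivative
`⟪∇f(p), p⟫` has sign `ν p` if `p` is a local maximum of `φ` (second derivative of `g`
negative there) and sign `−ν p` if `p` is a local minimum of `φ`. -/
def IsExtension {n : ℕ} (a : Ribbon n) (f : E2 → ℝ) : Prop :=
  ContDiff ℝ (⊤ : ℕ∞) f ∧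
  (∀ t : ℝ, f (sphPt t) = a.g t) ∧
  (∀ x ∈ Metric.sphere (0 : E2) 1, fderiv ℝ f x ≠ 0) ∧
  (∀ i : Fin n,
    (deriv (deriv a.g) (a.θ i) < 0 →
      0 < (a.ν i : ℝ) * ⟪gradient f (sphPt (a.θ i)), sphPt (a.θ i)⟫) ∧
    (0 < deriv (deriv a.g) (a.θ i) →
      (a.ν i : ℝ) * ⟪gradient f (sphPt (a.θ i)), sphPt (a.θ i)⟫ < 0))

/-- The ribbon invariant γ: the infimum, over all extensions `f` of `a`, of the number of
critical points of `f` in the open unit disk (a value in `ℕ∞`). -/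
def gammaR {n : ℕ} (a : Ribbon n) : ℕ∞ :=
  sInf {k : ℕ∞ | ∃ f : E2 → ℝ, IsExtension a f ∧ (critPts f).encard = k}

/-- The cyclically next node index. -/
def Ribbon.next {n : ℕ} (a : Ribbon n) (i : Fin n) : Fin n :=
  ⟨((i : ℕ) + 1) % n, Nat.mod_lt _ a.n_pos⟩

/-- The cluster number δ(a): the least cardinality of a finite subset of ℝ meeting, for
every `i`, the closed interval with endpoints `l i = φ (p i)` and `l (i+1)` (cyclically). -/
def clusterNumber {n : ℕ} (a : Ribbon n) : ℕ :=
  sInf {k : ℕ | ∃ A : Finset ℝ, A.card = k ∧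
    ∀ i : Fin n, ∃ x ∈ A, x ∈ Set.uIcc (a.g (a.θ i)) (a.g (a.θ (a.next i)))}

/-- β(a): the infimum, over all extensions `f` of `a`, of the number of distinct values taken
by `f` on the set of its critical points in the open unit disk. -/
def betaR {n : ℕ} (a : Ribbon n) : ℕ∞ :=
  sInf {k : ℕ∞ | ∃ f : E2 → ℝ, IsExtension a f ∧ (f '' critPts f).encard = k}

open scoped Topology
abbrev DD : Set E2 := Metric.closedBall (0 : E2) 1

def Lset (f : E2 → ℝ) (c : ℝ) : Set E2 := {x | x ∈ DD ∧ f x < c}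

lemma inward_local (x v : E2) (hx : x ∈ DD) (hv : ‖x‖ = 1 → ⟪x, v⟫ < 0) :
    ∃ δ > 0, ∀ y ∈ DD, dist y x < δ → ∀ s : ℝ, 0 ≤ s → s < δ → y + s • v ∈ DD := by
  have hx1 : ‖x‖ ≤ 1 := by simpa using hx
  have key : ∀ᶠ q : E2 × ℝ in 𝓝 ((x, 0) : E2 × ℝ), q.1 ∈ DD → 0 ≤ q.2 → q.1 + q.2 • v ∈ DD := by
    rcases lt_or_eq_of_le hx1 with h | h
    · have : Continuous fun q : E2 × ℝ => ‖q.1 + q.2 • v‖ := by fun_prop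
      have h2 := this.continuousAt (x := ((x, 0) : E2 × ℝ))
      have h3 := h2.eventually_lt_const (u := 1) (by simpa using h)
      filter_upwards [h3] with q hq _ _
      simpa using hq.le
    · have : Continuous fun q : E2 × ℝ => 2 * ⟪q.1, v⟫ + q.2 * ‖v‖ ^ 2 := by fun_prop
      have h2 := this.continuousAt (x := ((x, 0) : E2 × ℝ))
      have h3 := h2.eventually_lt_const (u := 0) (by have := hv h; simp; linarith)
      filter_upwards [h3] with q hq hD hs
      have hq1 : ‖q.1‖ ≤ 1 := by simpa using hD
      have e : ‖q.1 + q.2 • v‖ ^ 2 = ‖q.1‖ ^ 2 + q.2 * (2 * ⟪q.1, v⟫ + q.2 * ‖v‖ ^ 2) := by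
        rw [norm_add_sq_real, inner_smul_right, norm_smul, mul_pow, Real.norm_eq_abs, sq_abs]; ring
      have : ‖q.1 + q.2 • v‖ ^ 2 ≤ 1 := by
        rw [e]
        have : q.2 * (2 * ⟪q.1, v⟫ + q.2 * ‖v‖ ^ 2) ≤ 0 := mul_nonpos_of_nonneg_of_nonpos hs hq.le
        nlinarith [norm_nonneg q.1]
      have : ‖q.1 + q.2 • v‖ ≤ 1 := by
        nlinarith [norm_nonneg (q.1 + q.2 • v)]
      simpa using this
  obtain ⟨δ, hδ, h⟩ := Metric.eventually_nhds_iff.1 key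
  refine ⟨δ, hδ, fun y hy hyx s hs hsδ => h (y := (y, s)) ?_ hy hs⟩
  rw [Prod.dist_eq]
  simp [hyx, abs_of_nonneg hs, hsδ]

lemma local_join (f : E2 → ℝ) (hf : ContDiff ℝ (⊤ : ℕ∞) f) (x v : E2) (hx : x ∈ DD)
    (hd : fderiv ℝ f x v < 0) (hv : ‖x‖ = 1 → ⟪x, v⟫ < 0) :
    x ∈ closure (Lset f (f x)) ∧ ∃ δ > 0, ∀ y₁ ∈ Lset f (f x), ∀ y₂ ∈ Lset f (f x),
      dist y₁ x < δ → dist y₂ x < δ → JoinedIn (Lset f (f x)) y₁ y₂ := by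
  obtain ⟨δ₁, hδ₁, hin⟩ := inward_local x v hx hv
  have hdiff : Differentiable ℝ f := hf.differentiable (by simp)
  have hc : Continuous fun y => fderiv ℝ f y v :=
    (hf.continuous_fderiv (by simp)).clm_apply continuous_const
  have h1 : ∀ᶠ q : E2 × ℝ in 𝓝 ((x, 0) : E2 × ℝ), fderiv ℝ f (q.1 + q.2 • v) v < 0 := by
    have : Continuous fun q : E2 × ℝ => fderiv ℝ f (q.1 + q.2 • v) v :=
      hc.comp (by fun_prop)
    exact this.continuousAt.eventually_lt_const (by simpa using hd)
  obtain ⟨δ₂, hδ₂, hder⟩ := Metric.eventually_nhds_iff.1 h1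
  have hder' : ∀ y, dist y x < δ₂ → ∀ s : ℝ, 0 ≤ s → s < δ₂ → fderiv ℝ f (y + s • v) v < 0 := by
    intro y hy s hs hs2
    refine hder (y := (y, s)) ?_
    rw [Prod.dist_eq]
    simp [hy, abs_of_nonneg hs, hs2]
  have hanti : ∀ y, dist y x < δ₂ → StrictAntiOn (fun s : ℝ => f (y + s • v)) (Set.Ico 0 δ₂) := by
    intro y hy
    apply strictAntiOn_of_deriv_neg (convex_Ico _ _)
    · exact (hdiff.continuous.comp (by fun_prop)).continuousOn
    · intro s hs
      rw [interior_Ico] at hs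
      have hd : HasDerivAt (fun s : ℝ => f (y + s • v)) (fderiv ℝ f (y + s • v) v) s := by
        have h2 : HasDerivAt (fun s : ℝ => y + s • v) v s := by
          simpa using ((hasDerivAt_id s).smul_const v).const_add y
        exact (hdiff _).hasFDerivAt.comp_hasDerivAt s h2
      rw [hd.deriv]
      exact hder' y hy s hs.1.le hs.2
  set τ := min δ₁ δ₂ / 2 with hτ
  have hm : 0 < min δ₁ δ₂ := lt_min hδ₁ hδ₂
  have hτ0 : 0 < τ := by positivity
  have hτ1 : τ < δ₁ := by have := min_le_left δ₁ δ₂; linarith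
  have hτ2 : τ < δ₂ := by have := min_le_right δ₁ δ₂; linarith
  have hxs : ∀ s : ℝ, 0 < s → s ≤ τ → x + s • v ∈ Lset f (f x) := by
    intro s hs hsτ
    refine ⟨hin x hx (by simpa using hδ₁) s hs.le (by linarith), ?_⟩
    have := hanti x (by simpa using hδ₂) (a := 0) ⟨le_rfl, hδ₂⟩ (b := s) ⟨hs.le, by linarith⟩ hs
    simpa using this
  constructor
  · have ht : Filter.Tendsto (fun s : ℝ => x + s • v) (𝓝[>] 0) (𝓝 x) := by
      have : Continuous fun s : ℝ => x + s • v := by fun_prop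
      have := this.continuousAt (x := (0 : ℝ))
      unfold ContinuousAt at this
      simp only [zero_smul, add_zero] at this
      exact this.mono_left nhdsWithin_le_nhds
    refine mem_closure_of_tendsto ht ?_
    filter_upwards [Ioc_mem_nhdsGT hτ0] with s hs
    exact hxs s hs.1 hs.2
  · have h3 : ∀ᶠ y in 𝓝 (x + τ • v), f y < f x :=
      hdiff.continuous.continuousAt.eventually_lt_const (hxs τ hτ0 le_rfl).2
    obtain ⟨δ₃, hδ₃, hlt⟩ := Metric.eventually_nhds_iff.1 h3
    refine ⟨min δ₃ (min δ₁ δ₂), by positivity, ?_⟩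
    intro y₁ h₁ y₂ h₂ hd₁ hd₂
    have step : ∀ y ∈ Lset f (f x), dist y x < min δ₃ (min δ₁ δ₂) →
        JoinedIn (Lset f (f x)) y (y + τ • v) := by
      intro y hy hyd
      apply JoinedIn.of_segment_subset
      rw [segment_eq_image']
      rintro _ ⟨s, hs, rfl⟩
      simp only [add_sub_cancel_left, smul_smul]
      have hyd1 : dist y x < δ₁ := by simp at hyd; tauto
      have hyd2 : dist y x < δ₂ := by simp at hyd; tauto
      have a0 : 0 ≤ s * τ := mul_nonneg hs.1 hτ0.le
      have a1 : s * τ ≤ τ := by nlinarith [hs.2]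
      refine ⟨hin y hy.1 hyd1 _ a0 (by linarith), ?_⟩
      have := (hanti y hyd2).antitoneOn (a := 0) ⟨le_rfl, hδ₂⟩ (b := s * τ)
        ⟨a0, by linarith⟩ a0
      simp only [zero_smul, add_zero] at this
      exact this.trans_lt hy.2
    have mid : JoinedIn (Lset f (f x)) (y₁ + τ • v) (y₂ + τ • v) := by
      apply JoinedIn.of_segment_subset
      intro z hz
      have hconv : Convex ℝ (DD ∩ Metric.ball (x + τ • v) δ₃) :=
        (convex_closedBall _ _).inter (convex_ball _ _)
      have hmem : ∀ y ∈ Lset f (f x), dist y x < min δ₃ (min δ₁ δ₂) →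
          y + τ • v ∈ DD ∩ Metric.ball (x + τ • v) δ₃ := by
        intro y hy hyd
        simp only [lt_min_iff] at hyd
        exact ⟨hin y hy.1 hyd.2.1 τ hτ0.le hτ1, by simpa using hyd.1⟩
      have := hconv.segment_subset (hmem y₁ h₁ hd₁) (hmem y₂ h₂ hd₂) hz
      exact ⟨this.1, hlt this.2⟩
    exact ((step y₁ h₁ hd₁).trans mid).trans (step y₂ h₂ hd₂).symm

lemma core_step (f : E2 → ℝ) (hf : ContDiff ℝ (⊤ : ℕ∞) f) (Z : Set E2) (hZf : Z.Finite)
    (hZ : ∀ z ∈ Z, ∃ δ > 0, ∀ y ∈ DD, dist y z < δ → f y ≤ f z → y = z)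
    (p s : E2) (hpZ : p ∈ Z) (hpD : p ∈ DD) (hsD : s ∈ DD) (hsZ : s ∈ Z) (hps : p ≠ s) (c : ℝ)
    (hpc : f p ≤ c) (hsc : f s ≤ c)
    (hgood : ∀ x ∈ DD, f x = c → x ∉ Z →
      ∃ v, fderiv ℝ f x v < 0 ∧ (‖x‖ = 1 → ⟪x, v⟫ < 0))
    (hJ : ¬ JoinedIn (Lset f c) p s) : ∃ c' > c, ¬ JoinedIn (Lset f c') p s := by
  have hcont : Continuous f := hf.continuous
  set L := Lset f c with hL
  have H : ∀ x ∈ DD, f x ≤ c → ∃ δ > 0, ∀ y₁ ∈ L, ∀ y₂ ∈ L,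
      dist y₁ x < δ → dist y₂ x < δ → JoinedIn L y₁ y₂ := by
    intro x hx hxc
    rcases lt_or_eq_of_le hxc with h | h
    · obtain ⟨δ, hδ, hlt⟩ := Metric.eventually_nhds_iff.1
        (hcont.continuousAt.eventually_lt_const h)
      refine ⟨δ, hδ, fun y₁ h₁ y₂ h₂ hd₁ hd₂ => JoinedIn.of_segment_subset fun z hz => ?_⟩
      have hconv : Convex ℝ (DD ∩ Metric.ball x δ) :=
        (convex_closedBall _ _).inter (convex_ball _ _)
      have := hconv.segment_subset (x := y₁) (y := y₂) ⟨h₁.1, hd₁⟩ ⟨h₂.1, hd₂⟩ hz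
      exact ⟨this.1, hlt this.2⟩
    · by_cases hxZ : x ∈ Z
      · obtain ⟨δ, hδ, hiso⟩ := hZ x hxZ
        refine ⟨δ, hδ, fun y₁ h₁ y₂ h₂ hd₁ hd₂ => ?_⟩
        have := hiso y₁ h₁.1 hd₁ (by rw [h]; exact h₁.2.le)
        have h3 := h₁.2
        rw [this, h] at h3
        exact absurd h3 (lt_irrefl _)
      · obtain ⟨v, hv1, hv2⟩ := hgood x hx h hxZ
        have := (local_join f hf x v hx hv1 hv2).2
        rw [h] at this
        exact this
  have hiso : ∀ z ∈ Z, f z = c → z ∉ closure L := by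
    intro z hz hzc hcl
    obtain ⟨δ, hδ, hi⟩ := hZ z hz
    obtain ⟨y, hy, hd⟩ := Metric.mem_closure_iff.1 hcl δ hδ
    have := hi y hy.1 (by rwa [dist_comm]) (by rw [hzc]; exact hy.2.le)
    have h3 := hy.2
    rw [this, hzc] at h3
    exact lt_irrefl _ h3
  set K : Set E2 := DD ∩ {x | f x ≤ c} with hK
  have hKc : IsCompact K :=
    (isCompact_closedBall _ _).inter_right (isClosed_le hcont continuous_const)
  set V : Set E2 := {x | JoinedIn L p x} with hV
  have hVL : V ⊆ L := fun x hx => hx.target_mem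
  have hdis : ∀ x ∈ K, x ∈ closure V → x ∈ closure (L \ V) → False := by
    intro x hx h1 h2
    obtain ⟨δ, hδ, hj⟩ := H x hx.1 hx.2
    obtain ⟨y₁, hy₁, hd₁⟩ := Metric.mem_closure_iff.1 h1 δ hδ
    obtain ⟨y₂, hy₂, hd₂⟩ := Metric.mem_closure_iff.1 h2 δ hδ
    exact hy₂.2 (JoinedIn.trans hy₁ (hj y₁ (hVL hy₁) y₂ hy₂.1 (by rwa [dist_comm]) (by rwa [dist_comm])))
  set V' := K ∩ (closure V ∪ {p}) with hV'
  set W' := K ∩ (closure (L \ V) ∪ {z | z ∈ Z ∧ f z = c ∧ z ≠ p}) with hW'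
  have hV'c : IsCompact V' := hKc.inter_right (isClosed_closure.union isClosed_singleton)
  have hW'c : IsCompact W' := hKc.inter_right
    (isClosed_closure.union (hZf.subset (fun z hz => hz.1)).isClosed)
  have hdisj : Disjoint V' W' := by
    rw [Set.disjoint_left]
    rintro x ⟨hxK, h1⟩ ⟨-, h2⟩
    rcases h1 with h1 | h1
    · rcases h2 with h2 | h2
      · exact hdis x hxK h1 h2
      · exact hiso x h2.1 h2.2.1 (closure_mono hVL h1)
    · have hxp : x = p := h1
      subst hxp
      rcases h2 with h2 | h2
      · rcases lt_or_eq_of_le hpc with h | h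
        · exact hdis x hxK (subset_closure (JoinedIn.refl ⟨hpD, h⟩)) h2
        · exact hiso x hpZ h (closure_mono Set.sdiff_subset h2)
      · exact h2.2.2 rfl
  have hcov : K ⊆ V' ∪ W' := by
    intro x hx
    rcases lt_or_eq_of_le (show f x ≤ c from hx.2) with h | h
    · by_cases hxV : x ∈ V
      · exact Or.inl ⟨hx, Or.inl (subset_closure hxV)⟩
      · exact Or.inr ⟨hx, Or.inl (subset_closure ⟨⟨hx.1, h⟩, hxV⟩)⟩
    · by_cases hxZ : x ∈ Z
      · by_cases hxp : x = p
        · exact Or.inl ⟨hx, Or.inr hxp⟩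
        · exact Or.inr ⟨hx, Or.inr ⟨hxZ, h, hxp⟩⟩
      · obtain ⟨v, hv1, hv2⟩ := hgood x hx.1 h hxZ
        have h3 := (local_join f hf x v hx.1 hv1 hv2).1
        rw [h] at h3
        have : L = V ∪ (L \ V) := by rw [Set.union_sdiff_cancel hVL]
        rw [← hL, this, closure_union] at h3
        rcases h3 with h3 | h3
        · exact Or.inl ⟨hx, Or.inl h3⟩
        · exact Or.inr ⟨hx, Or.inl h3⟩
  have hpV : p ∈ V' := ⟨⟨hpD, hpc⟩, Or.inr rfl⟩
  have hsW : s ∈ W' := by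
    rcases hcov ⟨hsD, hsc⟩ with h | h
    · exfalso
      rcases h.2 with h2 | h2
      · rcases lt_or_eq_of_le hsc with h3 | h3
        · exact hdis s ⟨hsD, hsc⟩ h2 (subset_closure ⟨⟨hsD, h3⟩, hJ⟩)
        · exact hiso s hsZ h3 (closure_mono hVL h2)
      · exact hps h2.symm
    · exact h
  obtain ⟨O₁, O₂, hO₁, hO₂, hVO, hWO, hOd⟩ :=
    SeparatedNhds.of_isCompact_isCompact hV'c hW'c hdisj
  have hR : IsCompact (DD \ (O₁ ∪ O₂)) := (isCompact_closedBall _ _).diff (hO₁.union hO₂)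
  have hc' : ∃ c' > c, ∀ x ∈ DD \ (O₁ ∪ O₂), c' ≤ f x := by
    rcases (DD \ (O₁ ∪ O₂)).eq_empty_or_nonempty with he | hne
    · exact ⟨c + 1, by linarith, by simp [he]⟩
    · obtain ⟨x, hx, hmin⟩ := hR.exists_isMinOn hne hcont.continuousOn
      refine ⟨f x, ?_, fun y hy => hmin hy⟩
      by_contra hcon
      push Not at hcon
      rcases hcov ⟨hx.1, hcon⟩ with h | h
      · exact hx.2 (Or.inl (hVO h))
      · exact hx.2 (Or.inr (hWO h))
  obtain ⟨c', hcc, hc'⟩ := hc'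
  refine ⟨c', hcc, fun hj => ?_⟩
  obtain ⟨γ, hγ⟩ := hj
  have hpre : IsPreconnected (Set.range γ) := isPreconnected_range γ.continuous
  have hsub : Set.range γ ⊆ O₁ ∪ O₂ := by
    rintro _ ⟨t, rfl⟩
    by_contra hcon
    exact absurd (hγ t).2 (not_lt.2 (hc' _ ⟨(hγ t).1, hcon⟩))
  obtain ⟨z, -, hz⟩ := hpre O₁ O₂ hO₁ hO₂ hsub ⟨p, ⟨0, γ.source⟩, hVO hpV⟩ ⟨s, ⟨1, γ.target⟩, hWO hsW⟩
  exact Set.disjoint_left.1 hOd hz.1 hz.2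

lemma Lset_mono (f : E2 → ℝ) {c c' : ℝ} (h : c ≤ c') : Lset f c ⊆ Lset f c' :=
  fun _ hx => ⟨hx.1, hx.2.trans_le h⟩

lemma core (f : E2 → ℝ) (hf : ContDiff ℝ (⊤ : ℕ∞) f) (Z : Set E2) (hZf : Z.Finite)
    (hZ : ∀ z ∈ Z, ∃ δ > 0, ∀ y ∈ DD, dist y z < δ → f y ≤ f z → y = z)
    (p s : E2) (hpZ : p ∈ Z) (hpD : p ∈ DD) (hsD : s ∈ DD) (hsZ : s ∈ Z) (hps : p ≠ s) (M : ℝ)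
    (hgood : ∀ x ∈ DD, f p ≤ f x → f x < M → x ∉ Z →
      ∃ v, fderiv ℝ f x v < 0 ∧ (‖x‖ = 1 → ⟪x, v⟫ < 0))
    (hJ : JoinedIn (Lset f M) p s) : False := by
  set C : Set ℝ := {c | ¬ JoinedIn (Lset f c) p s} with hC
  have hbd : ∀ c ∈ C, c ≤ M := by
    intro c hc
    by_contra hcon
    push Not at hcon
    exact hc (hJ.mono (Lset_mono f hcon.le))
  have hBA : BddAbove C := ⟨M, hbd⟩
  have h0 : max (f p) (f s) ∈ C := by
    intro hj
    have h1 := hj.source_mem.2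
    have h2 := hj.target_mem.2
    rcases max_choice (f p) (f s) with h | h <;> rw [h] at h1 h2 <;> linarith
  set c := sSup C with hc
  have hc0 : max (f p) (f s) ≤ c := le_csSup hBA h0
  have hcM : c ≤ M := csSup_le ⟨_, h0⟩ hbd
  have hjl : ∀ d, JoinedIn (Lset f d) p s → ∃ d' < d, JoinedIn (Lset f d') p s := by
    rintro d ⟨γ, hγ⟩
    obtain ⟨t, -, ht⟩ := isCompact_univ.exists_isMaxOn (Set.univ_nonempty)
      ((hf.continuous.comp γ.continuous).continuousOn (s := Set.univ))
    refine ⟨(f (γ t) + d) / 2, by have := (hγ t).2; linarith, γ, fun u => ⟨(hγ u).1, ?_⟩⟩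
    have h1 : f (γ u) ≤ f (γ t) := ht (Set.mem_univ u)
    have := (hγ t).2
    linarith
  have hcC : c ∈ C := by
    intro hj
    obtain ⟨d, hd, hj⟩ := hjl c hj
    have : c ≤ d := csSup_le ⟨_, h0⟩ (fun e he => by
      by_contra hcon
      push Not at hcon
      exact he (hj.mono (Lset_mono f hcon.le)))
    linarith
  have hcM' : c < M := lt_of_le_of_ne hcM (fun h => hcC (h ▸ hJ))
  obtain ⟨c', h1, h2⟩ := core_step f hf Z hZf hZ p s hpZ hpD hsD hsZ hps c
    ((le_max_left _ _).trans hc0) ((le_max_right _ _).trans hc0)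
    (fun x hx hxc hxZ => hgood x hx (by rw [hxc]; exact (le_max_left _ _).trans hc0)
      (by rw [hxc]; exact hcM') hxZ) hcC
  have : c' ≤ c := le_csSup hBA h2
  linarith
lemma sphPt_zero (t : ℝ) : sphPt t 0 = Real.cos t := by simp [sphPt]
lemma sphPt_one (t : ℝ) : sphPt t 1 = Real.sin t := by simp [sphPt]

def tanPt (t : ℝ) : E2 := (EuclideanSpace.equiv (Fin 2) ℝ).symm ![-Real.sin t, Real.cos t]
lemma tanPt_zero (t : ℝ) : tanPt t 0 = -Real.sin t := by simp [tanPt]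
lemma tanPt_one (t : ℝ) : tanPt t 1 = Real.cos t := by simp [tanPt]

lemma hasDerivAt_sphPt (t : ℝ) : HasDerivAt sphPt (tanPt t) t := by
  have h : HasDerivAt (fun t => (![Real.cos t, Real.sin t] : Fin 2 → ℝ))
      ![-Real.sin t, Real.cos t] t := by
    rw [hasDerivAt_pi]
    intro i
    fin_cases i
    · simpa using Real.hasDerivAt_cos t
    · simpa using Real.hasDerivAt_sin t
  exact (EuclideanSpace.equiv (Fin 2) ℝ).symm.toContinuousLinearMap.hasFDerivAt.comp_hasDerivAt t h

lemma continuous_sphPt : Continuous sphPt :=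
  continuous_iff_continuousAt.2 fun t => (hasDerivAt_sphPt t).continuousAt

lemma norm_sphPt (t : ℝ) : ‖sphPt t‖ = 1 := by
  rw [EuclideanSpace.norm_eq]
  simp [Fin.sum_univ_two, sphPt_zero, sphPt_one]

lemma inner_sphPt_tanPt (t : ℝ) : ⟪sphPt t, tanPt t⟫ = 0 := by
  simp [PiLp.inner_apply, Fin.sum_univ_two, sphPt_zero, sphPt_one, tanPt_zero, tanPt_one]
  ring

lemma inner_sphPt_self (t : ℝ) : ⟪sphPt t, sphPt t⟫ = 1 := by
  rw [real_inner_self_eq_norm_sq, norm_sphPt]; norm_num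

lemma sphPt_add_two_pi (t : ℝ) : sphPt (t + 2 * Real.pi) = sphPt t := by
  simp [sphPt]

lemma sphPt_mem (t : ℝ) : sphPt t ∈ DD := by simp [norm_sphPt]

lemma sphPt_decomp (t : ℝ) (y : E2) : y = ⟪sphPt t, y⟫ • sphPt t + ⟪tanPt t, y⟫ • tanPt t := by
  ext i
  fin_cases i
  · simp [PiLp.inner_apply, Fin.sum_univ_two, sphPt_zero, sphPt_one, tanPt_zero, tanPt_one]
    linear_combination (-y 0) * Real.sin_sq_add_cos_sq t
  · simp [PiLp.inner_apply, Fin.sum_univ_two, sphPt_zero, sphPt_one, tanPt_zero, tanPt_one]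
    linear_combination (-y 1) * Real.sin_sq_add_cos_sq t

/-- polar coordinates around angle `t₀` -/
lemma exists_polar (t₀ : ℝ) (y : E2) (hy : 0 < ⟪sphPt t₀, y⟫) :
    y = ‖y‖ • sphPt (t₀ + Real.arctan (⟪tanPt t₀, y⟫ / ⟪sphPt t₀, y⟫)) := by
  set a := ⟪sphPt t₀, y⟫ with ha
  set b := ⟪tanPt t₀, y⟫ with hb
  have h0 : y = a • sphPt t₀ + b • tanPt t₀ := sphPt_decomp t₀ y
  have hn : ‖y‖ = Real.sqrt (a ^ 2 + b ^ 2) := by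
    rw [h0, EuclideanSpace.norm_eq]
    congr 1
    simp [Fin.sum_univ_two, sphPt_zero, sphPt_one, tanPt_zero, tanPt_one]
    linear_combination (a ^ 2 + b ^ 2) * Real.sin_sq_add_cos_sq t₀
  have hs : Real.sqrt (1 + (b / a) ^ 2) = ‖y‖ / a := by
    rw [hn, show 1 + (b / a) ^ 2 = (a ^ 2 + b ^ 2) / a ^ 2 by field_simp, Real.sqrt_div (by positivity),
      Real.sqrt_sq hy.le]
  have hy0 : 0 < ‖y‖ := by rw [hn]; apply Real.sqrt_pos.2; positivity
  have hcos : Real.cos (Real.arctan (b / a)) = a / ‖y‖ := by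
    rw [Real.cos_arctan, hs]; field_simp
  have hsin : Real.sin (Real.arctan (b / a)) = b / ‖y‖ := by
    rw [Real.sin_arctan, hs]; field_simp
  have h00 : y 0 = a * Real.cos t₀ - b * Real.sin t₀ := by
    conv_lhs => rw [h0]
    simp [sphPt_zero, tanPt_zero]; ring
  have h01 : y 1 = a * Real.sin t₀ + b * Real.cos t₀ := by
    conv_lhs => rw [h0]
    simp [sphPt_one, tanPt_one]
  ext i
  fin_cases i
  · simp only [Fin.zero_eta, PiLp.smul_apply, sphPt_zero, smul_eq_mul]
    rw [Real.cos_add, hcos, hsin, h00]; field_simp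
  · simp only [Fin.mk_one, PiLp.smul_apply, sphPt_one, smul_eq_mul]
    rw [Real.sin_add, hcos, hsin, h01]; field_simp

lemma exists_sphPt (x : E2) : ∃ t, x = ‖x‖ • sphPt t := by
  by_cases h : 0 < ⟪sphPt 0, x⟫
  · exact ⟨_, exists_polar 0 x h⟩
  by_cases h2 : 0 < ⟪sphPt Real.pi, x⟫
  · exact ⟨_, exists_polar _ x h2⟩
  have h3 : x 0 = 0 := by
    simp [PiLp.inner_apply, Fin.sum_univ_two, sphPt_zero, sphPt_one] at h h2
    linarith
  rcases le_total 0 (x 1) with h4 | h4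
  · refine ⟨Real.pi / 2, ?_⟩
    have : ‖x‖ = x 1 := by
      rw [EuclideanSpace.norm_eq]; simp [Fin.sum_univ_two, h3, Real.sqrt_sq h4]
    ext i
    fin_cases i <;> simp [sphPt_zero, sphPt_one, this, h3]
  · refine ⟨-(Real.pi / 2), ?_⟩
    have : ‖x‖ = -x 1 := by
      rw [EuclideanSpace.norm_eq]; simp [Fin.sum_univ_two, h3, Real.sqrt_sq_eq_abs, abs_of_nonpos h4]
    ext i
    fin_cases i <;> simp [sphPt_zero, sphPt_one, this, h3]

lemma hasDerivAt_tan (f : E2 → ℝ) (hf : Differentiable ℝ f) (r t : ℝ) :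
    HasDerivAt (fun t => f (r • sphPt t)) (fderiv ℝ f (r • sphPt t) (r • tanPt t)) t :=
  (hf _).hasFDerivAt.comp_hasDerivAt t ((hasDerivAt_sphPt t).const_smul r)

lemma hasDerivAt_rad (f : E2 → ℝ) (hf : Differentiable ℝ f) (r t : ℝ) :
    HasDerivAt (fun r : ℝ => f (r • sphPt t)) (fderiv ℝ f (r • sphPt t) (sphPt t)) r := by
  have h2 : HasDerivAt (fun r : ℝ => r • sphPt t) (sphPt t) r := by
    simpa using (hasDerivAt_id r).smul_const (sphPt t)
  exact (hf _).hasFDerivAt.comp_hasDerivAt r h2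

lemma min_isolated (f : E2 → ℝ) (hf : ContDiff ℝ (⊤ : ℕ∞) f) (t₀ : ℝ)
    (hrad : fderiv ℝ f (sphPt t₀) (sphPt t₀) < 0)
    (hmin : ∀ᶠ t in 𝓝 t₀, f (sphPt t) ≤ f (sphPt t₀) → t = t₀) :
    ∃ δ > 0, ∀ y ∈ DD, dist y (sphPt t₀) < δ → f y ≤ f (sphPt t₀) → y = sphPt t₀ := by
  have hdiff : Differentiable ℝ f := hf.differentiable (by simp)
  have h1 : ∀ᶠ q : ℝ × ℝ in 𝓝 ((1, t₀) : ℝ × ℝ), fderiv ℝ f (q.1 • sphPt q.2) (sphPt q.2) < 0 := by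
    have hc : Continuous fun q : ℝ × ℝ => fderiv ℝ f (q.1 • sphPt q.2) (sphPt q.2) := by
      have h2 := continuous_sphPt
      have h3 := hf.continuous_fderiv (by simp)
      have h4 : Continuous fun q : ℝ × ℝ => q.1 • sphPt q.2 := by fun_prop
      exact (h3.comp h4).clm_apply (h2.comp continuous_snd)
    exact hc.continuousAt.eventually_lt_const (by simpa using hrad)
  obtain ⟨δ, hδ, hneg⟩ := Metric.eventually_nhds_iff.1 h1
  have hang : Filter.Tendsto (fun y : E2 => t₀ + Real.arctan (⟪tanPt t₀, y⟫ / ⟪sphPt t₀, y⟫))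
      (𝓝 (sphPt t₀)) (𝓝 t₀) := by
    have hc : ContinuousAt (fun y : E2 => t₀ + Real.arctan (⟪tanPt t₀, y⟫ / ⟪sphPt t₀, y⟫))
        (sphPt t₀) := by
      have h5 : ContinuousAt (fun y : E2 => ⟪tanPt t₀, y⟫ / ⟪sphPt t₀, y⟫) (sphPt t₀) := by
        apply ContinuousAt.div
        · fun_prop
        · fun_prop
        · rw [inner_sphPt_self]; norm_num
      exact continuousAt_const.add (Real.continuous_arctan.continuousAt.comp h5)
    unfold ContinuousAt at hc
    simp only [real_inner_comm (sphPt t₀) (tanPt t₀), inner_sphPt_tanPt] at hc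
    simpa using hc
  have hnorm : Filter.Tendsto (fun y : E2 => ‖y‖) (𝓝 (sphPt t₀)) (𝓝 1) := by
    have := (continuous_norm (E := E2)).continuousAt (x := sphPt t₀)
    unfold ContinuousAt at this
    simpa only [norm_sphPt] using this
  have hpos : ∀ᶠ y in 𝓝 (sphPt t₀), 0 < ⟪sphPt t₀, y⟫ := by
    have : Continuous fun y : E2 => ⟪sphPt t₀, y⟫ := by fun_prop
    exact this.continuousAt.eventually_const_lt (by simp only [inner_sphPt_self]; norm_num)
  have hall : ∀ᶠ y in 𝓝 (sphPt t₀), y ∈ DD → f y ≤ f (sphPt t₀) → y = sphPt t₀ := by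
    filter_upwards [hpos, hang.eventually hmin, hang.eventually (Metric.ball_mem_nhds t₀ hδ),
      hnorm.eventually (Metric.ball_mem_nhds 1 hδ)] with y hy0 hymin hyt hyr hyD hle
    set t := t₀ + Real.arctan (⟪tanPt t₀, y⟫ / ⟪sphPt t₀, y⟫) with ht
    have hyp : y = ‖y‖ • sphPt t := exists_polar t₀ y hy0
    have hy1 : ‖y‖ ≤ 1 := by simpa using hyD
    have hyr' := abs_lt.1 (by simpa [Real.dist_eq] using hyr : |‖y‖ - 1| < δ)
    have hanti : StrictAntiOn (fun r : ℝ => f (r • sphPt t)) (Set.Icc ‖y‖ 1) := by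
      apply strictAntiOn_of_deriv_neg (convex_Icc _ _)
      · exact fun r _ => (hasDerivAt_rad f hdiff r t).continuousAt.continuousWithinAt
      · intro r hr
        rw [interior_Icc] at hr
        rw [(hasDerivAt_rad f hdiff r t).deriv]
        refine hneg (y := (r, t)) ?_
        rw [Prod.dist_eq]
        apply max_lt
        · simp only [Real.dist_eq]; rw [abs_lt]; constructor <;> linarith [hr.1, hr.2]
        · exact hyt
    have hle2 : f (sphPt t) ≤ f y := by
      have := hanti.antitoneOn (a := ‖y‖) ⟨le_rfl, hy1⟩ (b := 1) ⟨hy1, le_rfl⟩ hy1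
      simp only [one_smul] at this
      rwa [← hyp] at this
    have htt := hymin (hle2.trans hle)
    rcases lt_or_eq_of_le hy1 with h | h
    · exfalso
      have := hanti (a := ‖y‖) ⟨le_rfl, hy1⟩ (b := 1) ⟨hy1, le_rfl⟩ h
      simp only [one_smul] at this
      rw [← hyp, htt] at this
      linarith
    · rw [h, one_smul, htt] at hyp
      exact hyp
  obtain ⟨δ', hδ', h⟩ := Metric.eventually_nhds_iff.1 hall
  exact ⟨δ', hδ', fun y hy hd hle => h hd hy hle⟩

lemma good_dir (f : E2 → ℝ) (t : ℝ) 
    (h : fderiv ℝ f (sphPt t) (tanPt t) ≠ 0 ∨ 0 < fderiv ℝ f (sphPt t) (sphPt t)) :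
    ∃ v, fderiv ℝ f (sphPt t) v < 0 ∧ ⟪sphPt t, v⟫ < 0 := by
  rcases h with h | h
  · set A := fderiv ℝ f (sphPt t) (tanPt t)
    set B := fderiv ℝ f (sphPt t) (sphPt t) with hB
    have hA : 0 < A ^ 2 := by positivity
    refine ⟨-A • tanPt t - (A ^ 2 / (2 * (|B| + 1))) • sphPt t, ?_, ?_⟩
    · rw [map_sub, map_smul, map_smul, ← hB]
      change -A * A - A ^ 2 / (2 * (|B| + 1)) * B < 0
      have h3 : |A ^ 2 / (2 * (|B| + 1)) * B| ≤ A ^ 2 / 2 := by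
        rw [abs_mul, abs_of_nonneg (by positivity), div_mul_eq_mul_div, div_le_div_iff₀ (by positivity) (by positivity)]
        nlinarith [abs_nonneg B]
      have := abs_le.1 h3
      nlinarith
    · rw [inner_sub_right, inner_smul_right, inner_smul_right, inner_sphPt_tanPt, inner_sphPt_self]
      have : 0 < A ^ 2 / (2 * (|B| + 1)) := by positivity
      linarith
  · refine ⟨-sphPt t, by simpa using h, by rw [inner_neg_right, inner_sphPt_self]; norm_num⟩
lemma pos_right (h : ℝ → ℝ) (hc : Continuous h) (a b : ℝ) (h0 : h a = 0)
    (d : ℝ) (hd : HasDerivAt h d a) (hdp : 0 < d) (hz : ∀ t ∈ Set.Ioo a b, h t ≠ 0) :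
    ∀ t ∈ Set.Ioo a b, 0 < h t := by
  intro t ht
  have h1 := (hasDerivAt_iff_tendsto_slope.1 hd).eventually_const_lt hdp
  have h2 : ∀ᶠ y in 𝓝[>] a, 0 < slope h a y :=
    h1.filter_mono (nhdsWithin_mono _ (fun y hy => ne_of_gt hy))
  obtain ⟨y, hy1, hy2⟩ := (h2.and (Ioo_mem_nhdsGT ht.1)).exists
  have hy : 0 < h y := by
    rw [slope_def_field, h0, sub_zero] at hy1
    exact (div_pos_iff_of_pos_right (by linarith [hy2.1])).1 hy1
  by_contra hcon
  push Not at hcon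
  have hle : y ≤ t := hy2.2.le
  obtain ⟨z, hz1, hz2⟩ := intermediate_value_Icc' hle hc.continuousOn ⟨hcon, hy.le⟩
  exact hz z ⟨by linarith [hy2.1, hz1.1], by linarith [ht.2, hz1.2]⟩ hz2

lemma neg_left (h : ℝ → ℝ) (hc : Continuous h) (a b : ℝ) (h0 : h a = 0)
    (d : ℝ) (hd : HasDerivAt h d a) (hdp : 0 < d) (hz : ∀ t ∈ Set.Ioo b a, h t ≠ 0) :
    ∀ t ∈ Set.Ioo b a, h t < 0 := by
  intro t ht
  have := pos_right (fun t => -h (-t)) (by fun_prop) (-a) (-b) (by simp [h0]) d ?_ hdp ?_ (-t)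
    ⟨by linarith [ht.2], by linarith [ht.1]⟩
  · simpa using this
  · have hd' : HasDerivAt h d (-(-a)) := by simpa using hd
    have := (hd'.comp (-a) (hasDerivAt_neg (-a))).neg
    have e : -(d * -1) = d := by ring
    rw [e] at this
    exact this
  · intro u hu
    simpa using hz (-u) ⟨by linarith [hu.2], by linarith [hu.1]⟩

namespace Ribbon
variable {n : ℕ} (a : Ribbon n)

def idx (a : Ribbon n) (m : ℤ) : Fin n := ⟨(m % n).toNat, by
  have h := a.n_pos
  have h1 := Int.emod_nonneg m (show (n : ℤ) ≠ 0 by omega)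
  have h2 := Int.emod_lt_of_pos m (show (0 : ℤ) < n by omega)
  omega⟩

def T (a : Ribbon n) (m : ℤ) : ℝ := a.θ (a.idx m) + ((m / n : ℤ) : ℝ) * (2 * Real.pi)

lemma idx_val (m : ℤ) : ((a.idx m : ℕ) : ℤ) = m % n := by
  have h := a.n_pos
  have h1 := Int.emod_nonneg m (show (n : ℤ) ≠ 0 by omega)
  simp [idx, h1]

lemma idx_coe (i : Fin n) : a.idx ((i : ℕ) : ℤ) = i := by
  apply Fin.ext
  have := a.idx_val ((i : ℕ) : ℤ)
  rw [Int.emod_eq_of_lt (by omega) (by have := i.2; omega)] at this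
  exact_mod_cast this

lemma idx_coe_succ (i : Fin n) : a.idx (((i : ℕ) : ℤ) + 1) = a.next i := by
  apply Fin.ext
  have := a.idx_val (((i : ℕ) : ℤ) + 1)
  simp only [next]
  exact_mod_cast this

lemma idx_next (m : ℤ) : a.idx (m + 1) = a.next (a.idx m) := by
  rw [← idx_coe_succ]
  apply Fin.ext
  have h1 := a.idx_val (m + 1)
  have h2 := a.idx_val ((((a.idx m) : ℕ) : ℤ) + 1)
  have h3 : ((((a.idx m) : ℕ) : ℤ) + 1) % n = (m + 1) % n := by
    rw [a.idx_val m, Int.emod_add_emod]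
  omega

lemma idx_add_n (m : ℤ) : a.idx (m + n) = a.idx m := by
  apply Fin.ext
  have h1 := a.idx_val (m + n)
  have h2 := a.idx_val m
  rw [Int.add_emod_right] at h1
  omega

lemma T_add_n (m : ℤ) : a.T (m + n) = a.T m + 2 * Real.pi := by
  have h := a.n_pos
  unfold T
  rw [idx_add_n, Int.add_ediv_of_dvd_right (dvd_refl _), Int.ediv_self (by omega)]
  push_cast; ring

lemma T_coe (i : Fin n) : a.T ((i : ℕ) : ℤ) = a.θ i := by
  unfold T
  rw [idx_coe, Int.ediv_eq_zero_of_lt (by omega) (by have := i.2; omega)]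
  simp

lemma T_lt_succ (m : ℤ) : a.T m < a.T (m + 1) := by
  have hn := a.n_pos
  have h1 := a.idx_val m
  have h2 := a.idx_val (m + 1)
  have h3 := Int.emod_nonneg m (show (n : ℤ) ≠ 0 by omega)
  have h4 := Int.emod_lt_of_pos m (show (0 : ℤ) < n by omega)
  have h5 := Int.emod_add_mul_ediv m n
  by_cases h : m % n + 1 < n
  · have e1 : (m + 1) / n = m / n := by
      rw [show m + 1 = (m % n + 1) + n * (m / n) by linarith, Int.add_mul_ediv_left _ _ (by omega),
        Int.ediv_eq_zero_of_lt (by omega) h]; simp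
    have e2 : (m + 1) % n = m % n + 1 := by
      rw [show m + 1 = (m % n + 1) + n * (m / n) by linarith, Int.add_mul_emod_self_left,
        Int.emod_eq_of_lt (by omega) h]
    have : a.θ (a.idx m) < a.θ (a.idx (m + 1)) := a.theta_mono (by
      rw [Fin.lt_def]; omega)
    unfold T
    rw [e1]; linarith
  · have e1 : (m + 1) / n = m / n + 1 := by
      rw [show m + 1 = 0 + n * (m / n + 1) by linarith, Int.add_mul_ediv_left _ _ (by omega)]
      simp
    have b1 := (a.theta_mem (a.idx m)).2
    have b2 := (a.theta_mem (a.idx (m + 1))).1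
    unfold T
    rw [e1]; push_cast; linarith

lemma T_mono : StrictMono a.T := strictMono_int_of_lt_succ a.T_lt_succ

lemma per_int {h : ℝ → ℝ} (hp : Function.Periodic h (2 * Real.pi)) (m : ℤ) :
    h (a.T m) = h (a.θ (a.idx m)) := by
  unfold T
  exact hp.int_mul _ _

lemma periodic_deriv {h : ℝ → ℝ} {c : ℝ} (hp : Function.Periodic h c) :
    Function.Periodic (deriv h) c := by
  intro t
  have : (fun x => h (x + c)) = h := funext hp
  rw [← deriv_comp_add_const, this]

lemma g'_zero_iff (t : ℝ) : deriv a.g t = 0 ↔ ∃ m, t = a.T m := by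
  have hp := periodic_deriv a.periodic_g
  constructor
  · intro ht
    have hpi : 0 < 2 * Real.pi := Real.two_pi_pos
    set k := toIcoDiv hpi 0 t
    have hmem : t - k • (2 * Real.pi) ∈ Set.Ico (0 : ℝ) (2 * Real.pi) := by
      have := sub_toIcoDiv_zsmul_mem_Ico hpi 0 t
      rwa [zero_add] at this
    obtain ⟨i, hi⟩ := a.crit_only _ hmem (by rw [hp.sub_zsmul_eq]; exact ht)
    refine ⟨((i : ℕ) : ℤ) + n * k, ?_⟩
    have hn := a.n_pos
    have e : a.idx (((i : ℕ) : ℤ) + n * k) = i := by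
      apply Fin.ext
      have h1 := a.idx_val (((i : ℕ) : ℤ) + n * k)
      rw [Int.add_mul_emod_self_left, Int.emod_eq_of_lt (by omega) (by have := i.2; omega)] at h1
      exact_mod_cast h1
    unfold T
    rw [e, Int.add_mul_ediv_left _ _ (by omega), Int.ediv_eq_zero_of_lt (by omega) (by have := i.2; omega),
      ← hi]
    simp
  · rintro ⟨m, rfl⟩
    rw [a.per_int hp]
    exact a.node_crit _

lemma g''_ne (m : ℤ) : deriv (deriv a.g) (a.T m) ≠ 0 := by
  rw [a.per_int (periodic_deriv (periodic_deriv a.periodic_g))]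
  exact a.node_nondeg _

lemma exists_arc (t : ℝ) : ∃ m, a.T m ≤ t ∧ t < a.T (m + 1) := by
  have hk : ∀ k : ℤ, a.T (n * k) = a.T 0 + k * (2 * Real.pi) := by
    intro k
    have hn := a.n_pos
    have e : a.idx (n * k) = a.idx 0 := by
      apply Fin.ext
      have h1 := a.idx_val (n * k)
      have h2 := a.idx_val 0
      simp at h1 h2
      omega
    unfold T
    rw [e, Int.mul_ediv_cancel_left _ (by omega)]
    simp
  have hpi : 0 < 2 * Real.pi := Real.two_pi_pos
  have hup : ∃ b : ℤ, t < a.T b := by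
    obtain ⟨k, hk2⟩ := exists_int_gt ((t - a.T 0) / (2 * Real.pi))
    refine ⟨n * k, ?_⟩
    rw [hk]
    rw [div_lt_iff₀ hpi] at hk2
    linarith
  have hdn : ∃ b : ℤ, a.T b ≤ t := by
    obtain ⟨k, hk2⟩ := exists_int_lt ((t - a.T 0) / (2 * Real.pi))
    refine ⟨n * k, ?_⟩
    rw [hk]
    rw [lt_div_iff₀ hpi] at hk2
    linarith
  obtain ⟨b, hb⟩ := hup
  obtain ⟨m, hm1, hm2⟩ := Int.exists_greatest_of_bdd (P := fun m => a.T m ≤ t)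
    ⟨b, fun z hz => by
      by_contra hcon
      push Not at hcon
      have := a.T_mono hcon
      linarith⟩ hdn
  refine ⟨m, hm1, ?_⟩
  by_contra hcon
  push Not at hcon
  have := hm2 _ hcon
  omega

lemma diff_g : Differentiable ℝ a.g := a.smooth_g.differentiable (by simp)

lemma smooth_g' : ContDiff ℝ (⊤ : ℕ∞) (deriv a.g) := by
  have h := a.smooth_g
  exact (contDiff_infty_iff_deriv.1 h).2

lemma g'_ne (m : ℤ) (t : ℝ) (ht : t ∈ Set.Ioo (a.T m) (a.T (m + 1))) : deriv a.g t ≠ 0 := by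
  intro h
  obtain ⟨k, hk⟩ := (a.g'_zero_iff t).1 h
  rw [hk] at ht
  have h1 := a.T_mono.lt_iff_lt.1 ht.1
  have h2 := a.T_mono.lt_iff_lt.1 ht.2
  omega

lemma sign_right (m : ℤ) (t : ℝ) (ht : t ∈ Set.Ioo (a.T m) (a.T (m + 1))) :
    0 < deriv (deriv a.g) (a.T m) * deriv a.g t := by
  have hne := a.g''_ne m
  have hd : HasDerivAt (deriv a.g) (deriv (deriv a.g) (a.T m)) (a.T m) :=
    (a.smooth_g'.differentiable (by simp) _).hasDerivAt
  refine pos_right (fun t => deriv (deriv a.g) (a.T m) * deriv a.g t)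
    (continuous_const.mul a.smooth_g'.continuous) (a.T m) (a.T (m + 1)) ?_ _ (hd.const_mul _) ?_ ?_ t ht
  · simp [(a.g'_zero_iff (a.T m)).2 ⟨m, rfl⟩]
  · exact mul_self_pos.2 hne
  · exact fun u hu => mul_ne_zero hne (a.g'_ne m u hu)

lemma sign_left (m : ℤ) (t : ℝ) (ht : t ∈ Set.Ioo (a.T m) (a.T (m + 1))) :
    deriv (deriv a.g) (a.T (m + 1)) * deriv a.g t < 0 := by
  have hne := a.g''_ne (m + 1)
  have hd : HasDerivAt (deriv a.g) (deriv (deriv a.g) (a.T (m + 1))) (a.T (m + 1)) :=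
    (a.smooth_g'.differentiable (by simp) _).hasDerivAt
  refine neg_left (fun t => deriv (deriv a.g) (a.T (m + 1)) * deriv a.g t)
    (continuous_const.mul a.smooth_g'.continuous) (a.T (m + 1)) (a.T m) ?_ _ (hd.const_mul _) ?_ ?_ t ht
  · simp [(a.g'_zero_iff (a.T (m + 1))).2 ⟨m + 1, rfl⟩]
  · exact mul_self_pos.2 hne
  · exact fun u hu => mul_ne_zero hne (a.g'_ne m u hu)

lemma mono_arc (m : ℤ) (h : 0 < deriv (deriv a.g) (a.T m)) :
    StrictMonoOn a.g (Set.Icc (a.T m) (a.T (m + 1))) := by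
  apply strictMonoOn_of_deriv_pos (convex_Icc _ _) a.diff_g.continuous.continuousOn
  intro t ht
  rw [interior_Icc] at ht
  exact (pos_iff_pos_of_mul_pos (a.sign_right m t ht)).1 h

lemma anti_arc (m : ℤ) (h : deriv (deriv a.g) (a.T m) < 0) :
    StrictAntiOn a.g (Set.Icc (a.T m) (a.T (m + 1))) := by
  apply strictAntiOn_of_deriv_neg (convex_Icc _ _) a.diff_g.continuous.continuousOn
  intro t ht
  rw [interior_Icc] at ht
  exact (neg_iff_neg_of_mul_pos (a.sign_right m t ht)).1 h

lemma alt (m : ℤ) : deriv (deriv a.g) (a.T m) < 0 ↔ 0 < deriv (deriv a.g) (a.T (m + 1)) := by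
  have h := a.T_lt_succ m
  have ht : (a.T m + a.T (m + 1)) / 2 ∈ Set.Ioo (a.T m) (a.T (m + 1)) := ⟨by linarith, by linarith⟩
  have h1 := a.sign_right m _ ht
  have h2 := a.sign_left m _ ht
  constructor
  · intro h3
    have h4 := (neg_iff_neg_of_mul_pos h1).1 h3
    nlinarith
  · intro h3
    have h4 : deriv a.g ((a.T m + a.T (m + 1)) / 2) < 0 := by nlinarith
    exact (neg_iff_neg_of_mul_pos h1).2 h4

lemma g_T_ne (m k : ℤ) (h : a.g (a.T m) = a.g (a.T k)) : m % n = k % n := by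
  rw [a.per_int a.periodic_g, a.per_int a.periodic_g] at h
  have := a.values_distinct _ _ h
  rw [← idx_val, ← idx_val, this]

end Ribbon
namespace Ribbon
variable {n : ℕ} (a : Ribbon n)

lemma sphPt_T (m : ℤ) : sphPt (a.T m) = sphPt (a.θ (a.idx m)) := by
  have hp : Function.Periodic sphPt (2 * Real.pi) := sphPt_add_two_pi
  unfold T
  exact hp.int_mul _ _

lemma min_strict (m : ℤ) (h : 0 < deriv (deriv a.g) (a.T m)) (t : ℝ)
    (ht : t ∈ Set.Icc (a.T (m - 1)) (a.T (m + 1))) (hne : t ≠ a.T m) : a.g (a.T m) < a.g t := by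
  have h1 := a.T_lt_succ m
  have h2 := a.T_lt_succ (m - 1)
  have h3 := (a.alt (m - 1)).2 (by rwa [sub_add_cancel])
  have h4 := a.anti_arc (m - 1) h3
  rw [sub_add_cancel] at h2 h4
  rcases lt_or_gt_of_ne hne with h5 | h5
  · exact h4 ⟨ht.1, h5.le⟩ ⟨h2.le, le_rfl⟩ h5
  · exact a.mono_arc m h ⟨le_rfl, h1.le⟩ ⟨h5.le, ht.2⟩ h5

lemma pos_of_not (m : ℤ) (h : ¬ deriv (deriv a.g) (a.T m) < 0) : 0 < deriv (deriv a.g) (a.T m) :=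
  lt_of_le_of_ne (not_lt.1 h) (a.g''_ne m).symm

lemma max_strict (m : ℤ) (h : deriv (deriv a.g) (a.T m) < 0) (t : ℝ)
    (ht : t ∈ Set.Icc (a.T (m - 1)) (a.T (m + 1))) (hne : t ≠ a.T m) : a.g t < a.g (a.T m) := by
  have h1 := a.T_lt_succ m
  have h2 := a.T_lt_succ (m - 1)
  have h3 := a.alt (m - 1)
  rw [sub_add_cancel] at h3
  have h4 := a.mono_arc (m - 1) (a.pos_of_not _ (fun h5 => by have := h3.1 h5; linarith))
  rw [sub_add_cancel] at h2 h4
  rcases lt_or_gt_of_ne hne with h5 | h5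
  · exact h4 ⟨ht.1, h5.le⟩ ⟨h2.le, le_rfl⟩ h5
  · exact a.anti_arc m h ⟨le_rfl, h1.le⟩ ⟨h5.le, ht.2⟩ h5

lemma rad (hpos : ∀ i, a.ν i = 1) (f : E2 → ℝ) (hf : IsExtension a f) (m : ℤ) :
    (deriv (deriv a.g) (a.T m) < 0 → 0 < fderiv ℝ f (sphPt (a.T m)) (sphPt (a.T m))) ∧
    (0 < deriv (deriv a.g) (a.T m) → fderiv ℝ f (sphPt (a.T m)) (sphPt (a.T m)) < 0) := by
  have h := hf.2.2.2 (a.idx m)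
  rw [← a.per_int (periodic_deriv (periodic_deriv a.periodic_g)), ← sphPt_T, hpos] at h
  have e : ⟪gradient f (sphPt (a.T m)), sphPt (a.T m)⟫ = fderiv ℝ f (sphPt (a.T m)) (sphPt (a.T m)) := by
    unfold gradient
    rw [InnerProductSpace.toDual_symm_apply]
  rw [e] at h
  simpa using h

lemma arc_joined (f : E2 → ℝ) (hf : IsExtension a f) (M u w : ℝ)
    (h : ∀ t ∈ Set.uIcc u w, a.g t < M) : JoinedIn (Lset f M) (sphPt u) (sphPt w) := by
  have h1 : IsPathConnected (Set.uIcc u w) := (convex_uIcc u w).isPathConnected Set.nonempty_uIcc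
  have h2 := h1.image continuous_sphPt
  have h3 := h2.joinedIn _ ⟨u, Set.left_mem_uIcc, rfl⟩ _ ⟨w, Set.right_mem_uIcc, rfl⟩
  refine h3.mono ?_
  rintro _ ⟨t, ht, rfl⟩
  exact ⟨sphPt_mem t, by rw [hf.2.1]; exact h t ht⟩

lemma join_over (hpos : ∀ i, a.ν i = 1) (f : E2 → ℝ) (hf : IsExtension a f) (m : ℤ)
    (h : deriv (deriv a.g) (a.T m) < 0) :
    JoinedIn (Lset f (a.g (a.T m))) (sphPt (a.T (m - 1))) (sphPt (a.T (m + 1))) := by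
  have h1 := a.T_lt_succ m
  have h2 := a.T_lt_succ (m - 1)
  rw [sub_add_cancel] at h2
  obtain ⟨v, hv1, hv2⟩ := good_dir f (a.T m) (Or.inr ((a.rad hpos f hf m).1 h))
  obtain ⟨-, δ, hδ, hj⟩ := local_join f hf.1 (sphPt (a.T m)) v (sphPt_mem _) hv1 (fun _ => hv2)
  obtain ⟨η, hη, hd⟩ := Metric.continuousAt_iff.1 (continuous_sphPt.continuousAt (x := a.T m)) δ hδ
  rw [hf.2.1] at hj
  have hlt : ∀ t ∈ Set.Icc (a.T (m - 1)) (a.T (m + 1)), t ≠ a.T m → a.g t < a.g (a.T m) :=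
    fun t ht hne => a.max_strict m h t ht hne
  set t₁ := max (a.T (m - 1)) (a.T m - η / 2) with ht₁
  set t₂ := min (a.T (m + 1)) (a.T m + η / 2) with ht₂
  have b1 : a.T (m - 1) ≤ t₁ := le_max_left _ _
  have b2 : t₁ < a.T m := max_lt h2 (by linarith)
  have b3 : a.T m - η / 2 ≤ t₁ := le_max_right _ _
  have b4 : t₂ ≤ a.T (m + 1) := min_le_left _ _
  have b5 : a.T m < t₂ := lt_min h1 (by linarith)
  have b6 : t₂ ≤ a.T m + η / 2 := min_le_right _ _
  have j1 := a.arc_joined f hf (a.g (a.T m)) (a.T (m - 1)) t₁ (fun t ht => by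
    rw [Set.uIcc_of_le b1] at ht
    exact hlt t ⟨ht.1, by linarith [ht.2]⟩ (by linarith [ht.2] : t < a.T m).ne)
  have j2 := a.arc_joined f hf (a.g (a.T m)) t₂ (a.T (m + 1)) (fun t ht => by
    rw [Set.uIcc_of_le b4] at ht
    exact hlt t ⟨by linarith [ht.1], ht.2⟩ (by linarith [ht.1] : a.T m < t).ne')
  have j3 := hj (sphPt t₁) j1.target_mem (sphPt t₂) j2.source_mem
    (hd (by rw [Real.dist_eq, abs_lt]; constructor <;> linarith))
    (hd (by rw [Real.dist_eq, abs_lt]; constructor <;> linarith))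
  exact (j1.trans j3).trans j2

lemma lower_key (hn : 4 ≤ n) (hpos : ∀ i, a.ν i = 1) (f : E2 → ℝ) (hf : IsExtension a f) (m e : ℤ)
    (he : e = 1 ∨ e = -1) (h : deriv (deriv a.g) (a.T m) < 0) :
    ∃ x ∈ critPts f, f x ∈ Set.Icc (a.g (a.T (m + e))) (a.g (a.T m)) := by
  by_contra hcon
  push Not at hcon
  have hdiff : Differentiable ℝ f := hf.1.differentiable (by simp)
  have hJ : JoinedIn (Lset f (a.g (a.T m))) (sphPt (a.T (m + e))) (sphPt (a.T (m - e))) := by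
    have := a.join_over hpos f hf m h
    rcases he with rfl | rfl
    · exact this.symm
    · simpa [sub_eq_add_neg] using this
  have hgp : 0 < deriv (deriv a.g) (a.T (m + 1)) := (a.alt m).1 h
  have hgm : 0 < deriv (deriv a.g) (a.T (m - 1)) := by
    apply a.pos_of_not
    intro h3
    have := (a.alt (m - 1)).1 h3
    rw [sub_add_cancel] at this
    linarith
  set Z : Set E2 := (fun i : Fin n => sphPt (a.θ i)) '' {i | 0 < deriv (deriv a.g) (a.θ i)} with hZdef
  have hZmem : ∀ k, 0 < deriv (deriv a.g) (a.T k) → sphPt (a.T k) ∈ Z := by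
    intro k hk
    rw [a.per_int (periodic_deriv (periodic_deriv a.periodic_g))] at hk
    exact ⟨a.idx k, hk, (a.sphPt_T k).symm⟩
  refine core f hf.1 Z (Set.toFinite _) ?_ (sphPt (a.T (m + e))) (sphPt (a.T (m - e))) ?_
    (sphPt_mem _) (sphPt_mem _) ?_ ?_ (a.g (a.T m)) ?_ hJ
  · rintro _ ⟨i, hi, rfl⟩
    have hi' : 0 < deriv (deriv a.g) (a.T ((i : ℕ) : ℤ)) := by rw [a.T_coe]; exact hi
    have h2 := (a.rad hpos f hf ((i : ℕ) : ℤ)).2 hi'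
    rw [a.T_coe] at h2
    apply min_isolated f hf.1 _ h2
    have hm := a.min_strict _ hi'
    have b1 := a.T_lt_succ ((i : ℕ) : ℤ)
    have b2 := a.T_lt_succ (((i : ℕ) : ℤ) - 1)
    rw [sub_add_cancel] at b2
    rw [a.T_coe] at hm b1 b2
    filter_upwards [Icc_mem_nhds b2 b1] with t ht hle
    by_contra hne
    have := hm t ht hne
    rw [hf.2.1, hf.2.1] at hle
    linarith
  · rcases he with rfl | rfl
    · exact hZmem _ hgp
    · exact hZmem _ hgm
  · rcases he with rfl | rfl
    · exact hZmem _ hgm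
    · rw [sub_neg_eq_add]; exact hZmem _ hgp
  · intro heq
    have h1 : a.g (a.T (m + e)) = a.g (a.T (m - e)) := by rw [← hf.2.1, ← hf.2.1, heq]
    have h2 := a.g_T_ne _ _ h1
    have h3 := Int.emod_emod_of_dvd
    have h4 := Int.emod_eq_emod_iff_emod_sub_eq_zero.1 h2
    have h5 := Int.dvd_of_emod_eq_zero h4
    have h6 : m + e - (m - e) = 2 * e := by ring
    rw [h6] at h5
    rcases he with rfl | rfl
    · have := Int.le_of_dvd (by norm_num) h5
      omega
    · have := Int.le_of_dvd (by norm_num) ((Int.dvd_neg).2 h5)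
      omega
  · intro x hxD hx1 hx2 hxZ
    rw [hf.2.1] at hx1
    have hxn : ‖x‖ ≤ 1 := by simpa using hxD
    rcases lt_or_eq_of_le hxn with hlt | heq
    · have hne : fderiv ℝ f x ≠ 0 := fun h0 =>
        hcon x ⟨by simpa using hlt, h0⟩ ⟨hx1, hx2.le⟩
      obtain ⟨v, hv⟩ := DFunLike.ne_iff.1 hne
      rcases lt_or_gt_of_ne hv with hv | hv
      · exact ⟨v, hv, fun h => absurd h hlt.ne⟩
      · exact ⟨-v, by simpa using hv, fun h => absurd h hlt.ne⟩
    · obtain ⟨t, ht⟩ := exists_sphPt x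
      rw [heq, one_smul] at ht
      subst ht
      have hgd : fderiv ℝ f (sphPt t) (tanPt t) ≠ 0 ∨ 0 < fderiv ℝ f (sphPt t) (sphPt t) := by
        by_cases h0 : fderiv ℝ f (sphPt t) (tanPt t) = 0
        · right
          have h1 := hasDerivAt_tan f hdiff 1 t
          simp only [one_smul, hf.2.1] at h1
          obtain ⟨k, rfl⟩ := (a.g'_zero_iff t).1 (by rw [← h0]; exact h1.deriv)
          apply (a.rad hpos f hf k).1
          by_contra hk
          exact hxZ (hZmem k (a.pos_of_not k hk))
        · exact Or.inl h0
      obtain ⟨v, hv1, hv2⟩ := good_dir f t hgd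
      exact ⟨v, hv1, fun _ => hv2⟩

lemma lower_hit (hn : 4 ≤ n) (hpos : ∀ i, a.ν i = 1) (f : E2 → ℝ) (hf : IsExtension a f) (i : Fin n) :
    ∃ x ∈ critPts f, f x ∈ Set.uIcc (a.g (a.θ i)) (a.g (a.θ (a.next i))) := by
  have e1 : a.g (a.T ((i : ℕ) : ℤ)) = a.g (a.θ i) := by rw [a.T_coe]
  have e2 : a.g (a.T (((i : ℕ) : ℤ) + 1)) = a.g (a.θ (a.next i)) := by
    rw [a.per_int a.periodic_g, idx_coe_succ]
  rw [← e1, ← e2]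
  by_cases h : deriv (deriv a.g) (a.T ((i : ℕ) : ℤ)) < 0
  · obtain ⟨x, hx, h1⟩ := a.lower_key hn hpos f hf _ 1 (Or.inl rfl) h
    exact ⟨x, hx, Set.Icc_subset_uIcc' h1⟩
  · have h2 : deriv (deriv a.g) (a.T (((i : ℕ) : ℤ) + 1)) < 0 := by
      by_contra h3
      exact h ((a.alt _).2 (a.pos_of_not _ h3))
    obtain ⟨x, hx, h1⟩ := a.lower_key hn hpos f hf _ (-1) (Or.inr rfl) h2
    rw [add_neg_cancel_right] at h1
    exact ⟨x, hx, Set.Icc_subset_uIcc h1⟩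

lemma lower (hn : 4 ≤ n) (hpos : ∀ i, a.ν i = 1) (f : E2 → ℝ) (hf : IsExtension a f) :
    ((clusterNumber a : ℕ) : ℕ∞) ≤ (f '' critPts f).encard := by
  rcases Set.finite_or_infinite (f '' critPts f) with hfin | hinf
  · rw [hfin.encard_eq_coe_toFinset_card]
    norm_cast
    apply Nat.sInf_le
    refine ⟨hfin.toFinset, rfl, fun i => ?_⟩
    obtain ⟨x, hx, h⟩ := a.lower_hit hn hpos f hf i
    exact ⟨f x, by simpa using ⟨x, hx, rfl⟩, h⟩
  · rw [hinf.encard_eq]; exact le_top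

end Ribbon
lemma e_deriv_pos (x : ℝ) (hx : 0 < x) : ∃ d > 0, HasDerivAt expNegInvGlue d x := by
  have h1 : HasDerivAt (fun x : ℝ => Real.exp (-x⁻¹)) (Real.exp (-x⁻¹) * -(-(x ^ 2)⁻¹)) x :=
    ((hasDerivAt_inv hx.ne').neg).exp
  refine ⟨Real.exp (-x⁻¹) * -(-(x ^ 2)⁻¹), ?_, ?_⟩
  · rw [neg_neg]; positivity
  · refine h1.congr_of_eventuallyEq ?_
    filter_upwards [lt_mem_nhds hx] with y hy
    simp [expNegInvGlue, not_le.2 hy]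

lemma st_deriv_pos (x : ℝ) (h0 : 0 < x) (h1 : x < 1) : 0 < deriv Real.smoothTransition x := by
  obtain ⟨d, hd, hx⟩ := e_deriv_pos x h0
  obtain ⟨d', hd', hx'⟩ := e_deriv_pos (1 - x) (by linarith)
  have hsub : HasDerivAt (fun x : ℝ => 1 - x) (-1) x := by
    simpa using (hasDerivAt_id x).const_sub 1
  have h2 : HasDerivAt (fun x => expNegInvGlue (1 - x)) (d' * -1) x :=
    HasDerivAt.comp x hx' hsub
  have p1 := expNegInvGlue.pos_of_pos h0
  have p2 := expNegInvGlue.pos_of_pos (show 0 < 1 - x by linarith)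
  have h3 : HasDerivAt Real.smoothTransition _ x := hx.div (hx.add h2) (by positivity)
  rw [h3.deriv]
  apply div_pos _ (by positivity)
  nlinarith [mul_pos hd p2, mul_pos p1 hd']

lemma st_deriv_le (x : ℝ) (h0 : x ≤ 0) : deriv Real.smoothTransition x = 0 := by
  apply IsLocalMin.deriv_eq_zero
  refine Filter.Eventually.of_forall fun y => ?_
  rw [Real.smoothTransition.zero_of_nonpos h0]
  exact Real.smoothTransition.nonneg y

lemma st_deriv_ge (x : ℝ) (h0 : 1 ≤ x) : deriv Real.smoothTransition x = 0 := by
  apply IsLocalMax.deriv_eq_zero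
  refine Filter.Eventually.of_forall fun y => ?_
  rw [Real.smoothTransition.one_of_one_le h0]
  exact Real.smoothTransition.le_one y

lemma st_deriv_nonneg (x : ℝ) : 0 ≤ deriv Real.smoothTransition x := by
  rcases le_or_gt x 0 with h | h
  · rw [st_deriv_le x h]
  · rcases le_or_gt 1 x with h' | h'
    · rw [st_deriv_ge x h']
    · exact (st_deriv_pos x h h').le

lemma stair (B : Finset ℝ) (hB : B.Nonempty) : ∃ S : ℝ → ℝ, ContDiff ℝ (⊤ : ℕ∞) S ∧
    (∀ y, 0 ≤ deriv S y) ∧ (∀ y, deriv S y = 0 → S y ∈ B) ∧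
    (∀ b ∈ B, (∀ b' ∈ B, b ≤ b') → ∀ y ≤ b, S y = b) ∧
    (∀ b ∈ B, (∀ b' ∈ B, b' ≤ b) → ∀ y, b ≤ y → S y = b) := by
  induction B using Finset.induction_on_max with
  | empty => simp at hB
  | insert a s hmax ih =>
    rcases s.eq_empty_or_nonempty with rfl | hs
    · refine ⟨fun _ => a, contDiff_const, ?_, ?_, ?_, ?_⟩ <;> simp
    · obtain ⟨S, hS, hnn, hz, hlo, hhi⟩ := ih hs
      set b := s.max' hs with hb
      have hbs : b ∈ s := s.max'_mem hs
      have hbm : ∀ b' ∈ s, b' ≤ b := fun b' h => s.le_max' b' h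
      have hba : b < a := hmax b hbs
      have hab : 0 < a - b := by linarith
      set R : ℝ → ℝ := fun y => (a - b) * Real.smoothTransition ((y - b) / (a - b)) with hR
      have hst : Differentiable ℝ Real.smoothTransition :=
        (Real.smoothTransition.contDiff (n := 1)).differentiable (by simp)
      have hRd : ∀ y, HasDerivAt R (deriv Real.smoothTransition ((y - b) / (a - b))) y := by
        intro y
        have h1 : HasDerivAt (fun y => (y - b) / (a - b)) (1 / (a - b)) y :=
          ((hasDerivAt_id y).sub_const b).div_const _
        have h2 : HasDerivAt (fun y => Real.smoothTransition ((y - b) / (a - b)))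
            (deriv Real.smoothTransition ((y - b) / (a - b)) * (1 / (a - b))) y :=
          HasDerivAt.comp y (hst _).hasDerivAt h1
        have h3 := h2.const_mul (a - b)
        have e : ∀ d : ℝ, (a - b) * (d * (1 / (a - b))) = d := by
          intro d
          have := hab.ne'
          generalize a - b = c at this
          field_simp
        rw [e] at h3
        exact h3
      have hSd : ∀ y, HasDerivAt S (deriv S y) y := fun y =>
        (hS.differentiable (by simp) y).hasDerivAt
      have hd : ∀ y, deriv (fun y => S y + R y) y =
          deriv S y + deriv Real.smoothTransition ((y - b) / (a - b)) := fun y =>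
        ((hSd y).add (hRd y)).deriv
      have hR0 : ∀ y ≤ b, R y = 0 := by
        intro y hy
        simp only [hR]
        rw [Real.smoothTransition.zero_of_nonpos, mul_zero]
        exact div_nonpos_of_nonpos_of_nonneg (by linarith) hab.le
      have hR1 : ∀ y, a ≤ y → R y = a - b := by
        intro y hy
        simp only [hR]
        rw [Real.smoothTransition.one_of_one_le, mul_one]
        rw [le_div_iff₀ hab]; linarith
      refine ⟨fun y => S y + R y, ?_, ?_, ?_, ?_, ?_⟩
      · apply hS.add
        apply contDiff_const.mul
        apply Real.smoothTransition.contDiff.comp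
        fun_prop
      · intro y
        rw [hd]
        exact add_nonneg (hnn y) (st_deriv_nonneg _)
      · intro y hy
        rw [hd] at hy
        change S y + R y ∈ insert a s
        have h1 := hnn y
        have h2 := st_deriv_nonneg ((y - b) / (a - b))
        rcases le_or_gt y b with h | h
        · rw [hR0 y h, add_zero]
          exact Finset.mem_insert_of_mem (hz y (by linarith))
        · rcases le_or_gt a y with h' | h'
          · rw [hR1 y h', hhi b hbs hbm y h.le]
            simp
          · have := st_deriv_pos ((y - b) / (a - b)) (div_pos (by linarith) hab)
              (by rw [div_lt_one hab]; linarith)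
            linarith
      · intro x hx hxm y hy
        have hxb : x ≤ b := hxm b (Finset.mem_insert_of_mem hbs)
        have hxs : x ∈ s := by
          rcases Finset.mem_insert.1 hx with h | h
          · linarith
          · exact h
        change S y + R y = x
        rw [hR0 y (by linarith), add_zero]
        exact hlo x hxs (fun b' hb' => hxm b' (Finset.mem_insert_of_mem hb')) y hy
      · intro x hx hxm y hy
        have hax : a ≤ x := hxm a (Finset.mem_insert_self _ _)
        have hxa : x = a := by
          rcases Finset.mem_insert.1 hx with h | h
          · exact h
          · have := hmax x h; linarith
        change S y + R y = x
        rw [hR1 y (by linarith), hhi b hbs hbm y (by linarith), hxa]; ring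

namespace Ribbon
variable {n : ℕ} (a : Ribbon n)

lemma perturb (A : Finset ℝ)
    (hA : ∀ i : Fin n, ∃ x ∈ A, x ∈ Set.uIcc (a.g (a.θ i)) (a.g (a.θ (a.next i)))) :
    ∃ A' : Finset ℝ, A'.card ≤ A.card ∧ ∀ m : ℤ, ∃ x ∈ A',
      min (a.g (a.T m)) (a.g (a.T (m + 1))) < x ∧ x < max (a.g (a.T m)) (a.g (a.T (m + 1))) := by
  classical
  have hev : ∀ᶠ ε in 𝓝[>] (0 : ℝ), ∀ i : Fin n, ∀ x ∈ A, x ≠ a.g (a.θ i) → ε < |x - a.g (a.θ i)| := by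
    rw [Filter.eventually_all]
    intro i
    rw [Filter.eventually_all_finset]
    intro x _
    by_cases h : x = a.g (a.θ i)
    · simp [h]
    · have : 0 < |x - a.g (a.θ i)| := abs_pos.2 (sub_ne_zero.2 h)
      filter_upwards [Ioo_mem_nhdsGT this] with ε hε _
      exact hε.2
  obtain ⟨ε, hε, hε0⟩ := (hev.and self_mem_nhdsWithin).exists
  have hε0 : 0 < ε := hε0
  set F : ℝ → ℝ := fun x => if ∃ i, x = a.g (a.θ i) ∧ deriv (deriv a.g) (a.θ i) < 0 then x - ε else
    if ∃ i, x = a.g (a.θ i) then x + ε else x with hF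
  have hF1 : ∀ x, x - ε ≤ F x ∧ F x ≤ x + ε := by
    intro x
    simp only [hF]
    split_ifs <;> constructor <;> linarith
  have key : ∀ i j : Fin n, 0 < deriv (deriv a.g) (a.θ i) → deriv (deriv a.g) (a.θ j) < 0 →
      ∀ x ∈ A, a.g (a.θ i) < a.g (a.θ j) → a.g (a.θ i) ≤ x → x ≤ a.g (a.θ j) →
      a.g (a.θ i) < F x ∧ F x < a.g (a.θ j) := by
    intro i j hi hj x hx hij h1 h2
    rcases lt_or_eq_of_le h1 with h1 | h1
    · have e1 := hε i x hx h1.ne'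
      rw [abs_of_pos (by linarith)] at e1
      rcases lt_or_eq_of_le h2 with h2 | h2
      · have e2 := hε j x hx h2.ne
        rw [abs_of_neg (by linarith)] at e2
        have := hF1 x
        constructor <;> linarith
      · have : F x = x - ε := by
          simp only [hF]
          rw [if_pos ⟨j, h2, hj⟩]
        rw [this]
        constructor <;> linarith
    · have : F x = x + ε := by
        simp only [hF]
        rw [if_neg, if_pos ⟨i, h1.symm⟩]
        rintro ⟨k, hk, hk2⟩
        have := a.values_distinct i k (by rw [h1, hk])
        rw [this] at hi
        linarith
      have e2 := hε j x hx (by rw [← h1]; exact hij.ne)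
      rw [abs_of_neg (by linarith)] at e2
      rw [this]
      constructor <;> linarith
  refine ⟨A.image F, Finset.card_image_le, fun m => ?_⟩
  obtain ⟨x, hxA, hx⟩ := hA (a.idx m)
  refine ⟨F x, Finset.mem_image_of_mem _ hxA, ?_⟩
  have hlt := a.T_lt_succ m
  have hpp := periodic_deriv (periodic_deriv a.periodic_g)
  by_cases h : deriv (deriv a.g) (a.T m) < 0
  · have h2 := (a.alt m).1 h
    have h3 := a.anti_arc m h ⟨le_rfl, hlt.le⟩ ⟨hlt.le, le_rfl⟩ hlt
    rw [min_eq_right h3.le, max_eq_left h3.le]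
    rw [a.per_int hpp] at h h2
    rw [a.per_int a.periodic_g, a.per_int a.periodic_g] at h3 ⊢
    rw [← idx_next, Set.uIcc_of_ge h3.le] at hx
    exact key _ _ h2 h x hxA h3 hx.1 hx.2
  · have h1 := a.pos_of_not m h
    have h2 : deriv (deriv a.g) (a.T (m + 1)) < 0 := by
      by_contra h3
      exact h ((a.alt _).2 (a.pos_of_not _ h3))
    have h3 := a.mono_arc m h1 ⟨le_rfl, hlt.le⟩ ⟨hlt.le, le_rfl⟩ hlt
    rw [min_eq_left h3.le, max_eq_right h3.le]
    rw [a.per_int hpp] at h1 h2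
    rw [a.per_int a.periodic_g, a.per_int a.periodic_g] at h3 ⊢
    rw [← idx_next, Set.uIcc_of_le h3.le] at hx
    exact key _ _ h1 h2 x hxA h3 hx.1 hx.2

lemma exists_g1 (A : Finset ℝ) (hA : ∀ m : ℤ, ∃ x ∈ A,
      min (a.g (a.T m)) (a.g (a.T (m + 1))) < x ∧ x < max (a.g (a.T m)) (a.g (a.T (m + 1)))) :
    ∃ h : ℝ → ℝ, ContDiff ℝ (⊤ : ℕ∞) h ∧ Function.Periodic h (2 * Real.pi) ∧
      (∀ t, deriv h t = 0 → h t ∈ A) ∧ (∀ t, 0 ≤ deriv h t * deriv a.g t) ∧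
      ∀ m, (deriv (deriv a.g) (a.T m) < 0 → h (a.T m) < a.g (a.T m)) ∧
        (0 < deriv (deriv a.g) (a.T m) → a.g (a.T m) < h (a.T m)) := by
  classical
  choose! S hS hnn hz hlo hhi using stair
  set B : ℤ → Finset ℝ := fun m => A.filter (fun x =>
    min (a.g (a.T m)) (a.g (a.T (m + 1))) < x ∧ x < max (a.g (a.T m)) (a.g (a.T (m + 1)))) with hBdef
  have hBne : ∀ m, (B m).Nonempty := by
    intro m
    obtain ⟨x, hx, h⟩ := hA m
    exact ⟨x, Finset.mem_filter.2 ⟨hx, h⟩⟩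
  have hBA : ∀ m, B m ⊆ A := fun m => Finset.filter_subset _ _
  choose arc harc1 harc2 using a.exists_arc
  have huniq : ∀ t m, a.T m ≤ t → t < a.T (m + 1) → arc t = m := by
    intro t m h1 h2
    have h3 := a.T_mono.lt_iff_lt.1 ((harc1 t).trans_lt h2)
    have h4 := a.T_mono.lt_iff_lt.1 (h1.trans_lt (harc2 t))
    omega
  have hgT : ∀ m : ℤ, a.g (a.T (m + n)) = a.g (a.T m) := by
    intro m
    rw [T_add_n, a.periodic_g]
  have hBper : ∀ m : ℤ, B (m + n) = B m := by
    intro m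
    simp only [hBdef]
    rw [show m + n + 1 = (m + 1) + n by ring, hgT, hgT]
  have hnode : ∀ m, ∃ b ∈ A, (deriv (deriv a.g) (a.T m) < 0 → b < a.g (a.T m)) ∧
      (0 < deriv (deriv a.g) (a.T m) → a.g (a.T m) < b) ∧
      ∀ᶠ t in 𝓝 (a.T m), S (B m) (a.g t) = b ∧ S (B (m - 1)) (a.g t) = b := by
    intro m
    have l1 := a.T_lt_succ m
    have l2 := a.T_lt_succ (m - 1)
    rw [sub_add_cancel] at l2
    have hcg : ContinuousAt a.g (a.T m) := a.diff_g.continuous.continuousAt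
    have m1 : a.T (m - 1) ∈ Set.Icc (a.T (m - 1)) (a.T (m + 1)) := ⟨le_rfl, by linarith⟩
    have m2 : a.T (m + 1) ∈ Set.Icc (a.T (m - 1)) (a.T (m + 1)) := ⟨by linarith, le_rfl⟩
    obtain ⟨x, hxA, hx1, hx2⟩ := hA m
    obtain ⟨y, hyA, hy1, hy2⟩ := hA (m - 1)
    rw [sub_add_cancel] at hy1 hy2
    by_cases h : deriv (deriv a.g) (a.T m) < 0
    · have g1 := a.max_strict m h _ m1 l2.ne
      have g2 := a.max_strict m h _ m2 l1.ne'
      rw [min_eq_right g2.le] at hx1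
      rw [max_eq_left g2.le] at hx2
      rw [min_eq_left g1.le] at hy1
      rw [max_eq_right g1.le] at hy2
      set C := A.filter (fun z => z < a.g (a.T m)) with hC
      have hCne : C.Nonempty := ⟨x, Finset.mem_filter.2 ⟨hxA, hx2⟩⟩
      set b := C.max' hCne with hb
      have hbC := Finset.mem_filter.1 (C.max'_mem hCne)
      have hbx : x ≤ b := C.le_max' x (Finset.mem_filter.2 ⟨hxA, hx2⟩)
      have hby : y ≤ b := C.le_max' y (Finset.mem_filter.2 ⟨hyA, hy2⟩)
      refine ⟨b, hbC.1, fun _ => hbC.2, fun h' => by linarith, ?_⟩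
      filter_upwards [hcg.eventually_const_lt hbC.2] with t ht
      constructor
      · refine hhi (B m) (hBne m) b (Finset.mem_filter.2 ⟨hbC.1, ?_, ?_⟩) ?_ _ ht.le
        · rw [min_eq_right g2.le]; linarith
        · rw [max_eq_left g2.le]; exact hbC.2
        · intro z hz
          have hz := Finset.mem_filter.1 hz
          rw [max_eq_left g2.le] at hz
          exact C.le_max' z (Finset.mem_filter.2 ⟨hz.1, hz.2.2⟩)
      · refine hhi (B (m - 1)) (hBne _) b (Finset.mem_filter.2 ⟨hbC.1, ?_, ?_⟩) ?_ _ ht.le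
        · rw [sub_add_cancel, min_eq_left g1.le]; linarith
        · rw [sub_add_cancel, max_eq_right g1.le]; exact hbC.2
        · intro z hz
          have hz := Finset.mem_filter.1 hz
          rw [sub_add_cancel, max_eq_right g1.le] at hz
          exact C.le_max' z (Finset.mem_filter.2 ⟨hz.1, hz.2.2⟩)
    · have h := a.pos_of_not m h
      have g1 := a.min_strict m h _ m1 l2.ne
      have g2 := a.min_strict m h _ m2 l1.ne'
      rw [min_eq_left g2.le] at hx1
      rw [max_eq_right g2.le] at hx2
      rw [min_eq_right g1.le] at hy1
      rw [max_eq_left g1.le] at hy2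
      set C := A.filter (fun z => a.g (a.T m) < z) with hC
      have hCne : C.Nonempty := ⟨x, Finset.mem_filter.2 ⟨hxA, hx1⟩⟩
      set b := C.min' hCne with hb
      have hbC := Finset.mem_filter.1 (C.min'_mem hCne)
      have hbx : b ≤ x := C.min'_le x (Finset.mem_filter.2 ⟨hxA, hx1⟩)
      have hby : b ≤ y := C.min'_le y (Finset.mem_filter.2 ⟨hyA, hy1⟩)
      refine ⟨b, hbC.1, fun h' => by linarith, fun _ => hbC.2, ?_⟩
      filter_upwards [hcg.eventually_lt_const hbC.2] with t ht
      constructor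
      · refine hlo (B m) (hBne m) b (Finset.mem_filter.2 ⟨hbC.1, ?_, ?_⟩) ?_ _ ht.le
        · rw [min_eq_left g2.le]; exact hbC.2
        · rw [max_eq_right g2.le]; linarith
        · intro z hz
          have hz := Finset.mem_filter.1 hz
          rw [min_eq_left g2.le] at hz
          exact C.min'_le z (Finset.mem_filter.2 ⟨hz.1, hz.2.1⟩)
      · refine hlo (B (m - 1)) (hBne _) b (Finset.mem_filter.2 ⟨hbC.1, ?_, ?_⟩) ?_ _ ht.le
        · rw [sub_add_cancel, min_eq_right g1.le]; exact hbC.2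
        · rw [sub_add_cancel, max_eq_left g1.le]; linarith
        · intro z hz
          have hz := Finset.mem_filter.1 hz
          rw [sub_add_cancel, min_eq_right g1.le] at hz
          exact C.min'_le z (Finset.mem_filter.2 ⟨hz.1, hz.2.1⟩)
  set h : ℝ → ℝ := fun t => S (B (arc t)) (a.g t) with hh
  have hloc : ∀ m t, t ∈ Set.Ioo (a.T m) (a.T (m + 1)) → h =ᶠ[𝓝 t] fun t => S (B m) (a.g t) := by
    intro m t ht
    filter_upwards [Ioo_mem_nhds ht.1 ht.2] with u hu
    simp only [hh]
    rw [huniq u m hu.1.le hu.2]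
  choose b hbA hb1 hb2 hb3 using hnode
  have hlocn : ∀ m, h =ᶠ[𝓝 (a.T m)] fun _ => b m := by
    intro m
    have l1 := a.T_lt_succ m
    have l2 := a.T_lt_succ (m - 1)
    rw [sub_add_cancel] at l2
    filter_upwards [Ioo_mem_nhds l2 l1, hb3 m] with u hu hu2
    simp only [hh]
    rcases lt_or_ge u (a.T m) with h' | h'
    · rw [huniq u (m - 1) hu.1.le (by rwa [sub_add_cancel])]; exact hu2.2
    · rw [huniq u m h' hu.2]; exact hu2.1
  have hcase : ∀ t, (∃ m, t = a.T m) ∨ ∃ m, t ∈ Set.Ioo (a.T m) (a.T (m + 1)) := by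
    intro t
    rcases lt_or_eq_of_le (harc1 t) with h' | h'
    · exact Or.inr ⟨arc t, h', harc2 t⟩
    · exact Or.inl ⟨arc t, h'.symm⟩
  have hder : ∀ m t, t ∈ Set.Ioo (a.T m) (a.T (m + 1)) →
      deriv h t = deriv (S (B m)) (a.g t) * deriv a.g t := by
    intro m t ht
    rw [(hloc m t ht).deriv_eq]
    have h1 : HasDerivAt (S (B m)) (deriv (S (B m)) (a.g t)) (a.g t) :=
      ((hS (B m) (hBne m)).differentiable (by simp) _).hasDerivAt
    exact (HasDerivAt.comp t h1 (a.diff_g t).hasDerivAt).deriv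
  refine ⟨h, ?_, ?_, ?_, ?_, ?_⟩
  · rw [contDiff_iff_contDiffAt]
    intro t
    rcases hcase t with ⟨m, rfl⟩ | ⟨m, hm⟩
    · exact contDiffAt_const.congr_of_eventuallyEq (hlocn m)
    · refine ContDiffAt.congr_of_eventuallyEq ?_ (hloc m t hm)
      exact ((hS (B m) (hBne m)).comp a.smooth_g).contDiffAt
  · intro t
    simp only [hh]
    rw [a.periodic_g, huniq (t + 2 * Real.pi) (arc t + n), hBper]
    · rw [T_add_n]; linarith [harc1 t]
    · rw [show arc t + n + 1 = (arc t + 1) + n by ring, T_add_n]; linarith [harc2 t]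
  · intro t ht
    rcases hcase t with ⟨m, rfl⟩ | ⟨m, hm⟩
    · rw [(hlocn m).eq_of_nhds]; exact hbA m
    · rw [hder m t hm] at ht
      have := (mul_eq_zero.1 ht).resolve_right (a.g'_ne m t hm)
      rw [(hloc m t hm).eq_of_nhds]
      exact hBA m (hz (B m) (hBne m) _ this)
  · intro t
    rcases hcase t with ⟨m, rfl⟩ | ⟨m, hm⟩
    · rw [(a.g'_zero_iff _).2 ⟨m, rfl⟩, mul_zero]
    · rw [hder m t hm, mul_assoc]
      exact mul_nonneg (hnn (B m) (hBne m) _) (mul_self_nonneg _)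
  · intro m
    rw [(hlocn m).eq_of_nhds]
    exact ⟨hb1 m, hb2 m⟩

end Ribbon
def Ang (h : ℝ → ℝ) (x : E2) : ℝ := h (Classical.choose (exists_sphPt x))

lemma Ang_smul (h : ℝ → ℝ) (hp : Function.Periodic h (2 * Real.pi)) (r : ℝ) (hr : 0 < r) (t : ℝ) :
    Ang h (r • sphPt t) = h t := by
  unfold Ang
  have h1 := Classical.choose_spec (exists_sphPt (r • sphPt t))
  set t' := Classical.choose (exists_sphPt (r • sphPt t)) with ht'
  rw [norm_smul, norm_sphPt, mul_one, Real.norm_of_nonneg hr.le] at h1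
  have h2 : sphPt t = sphPt t' := smul_right_injective E2 hr.ne' h1
  have hc : Real.cos t' = Real.cos t := by rw [← sphPt_zero, ← sphPt_zero, h2]
  have hs : Real.sin t' = Real.sin t := by rw [← sphPt_one, ← sphPt_one, h2]
  have h3 := Real.Angle.cos_sin_inj hc hs
  obtain ⟨k, hk⟩ := Real.Angle.angle_eq_iff_two_pi_dvd_sub.1 h3
  have : t' = t + k * (2 * Real.pi) := by linarith
  rw [this]
  exact hp.int_mul k t

lemma Ang_smooth (h : ℝ → ℝ) (hs : ContDiff ℝ (⊤ : ℕ∞) h)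
    (hp : Function.Periodic h (2 * Real.pi)) (x : E2) (hx : x ≠ 0) :
    ContDiffAt ℝ (⊤ : ℕ∞) (Ang h) x := by
  obtain ⟨t₀, ht⟩ := exists_sphPt x
  have hpos : 0 < ⟪sphPt t₀, x⟫ := by
    rw [ht, inner_smul_right, inner_sphPt_self, mul_one]
    exact norm_pos_iff.2 hx
  have hc : Continuous fun y : E2 => ⟪sphPt t₀, y⟫ := by fun_prop
  have hev : Ang h =ᶠ[𝓝 x] fun y => h (t₀ + Real.arctan (⟪tanPt t₀, y⟫ / ⟪sphPt t₀, y⟫)) := by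
    filter_upwards [hc.continuousAt.eventually_const_lt hpos] with y hy
    have hy0 : 0 < ‖y‖ := by
      rw [norm_pos_iff]
      rintro rfl
      simp at hy
    conv_lhs => rw [exists_polar t₀ y hy]
    exact Ang_smul h hp _ hy0 _
  refine ContDiffAt.congr_of_eventuallyEq ?_ hev
  refine hs.contDiffAt.comp x ?_
  refine contDiffAt_const.add ?_
  refine Real.contDiff_arctan.contDiffAt.comp x ?_
  refine ContDiffAt.div ?_ ?_ hpos.ne'
  · exact contDiffAt_const.inner ℝ contDiffAt_id
  · exact contDiffAt_const.inner ℝ contDiffAt_id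

def rho1 (r : ℝ) : ℝ := expNegInvGlue (r - 1 / 2) / expNegInvGlue (1 / 2)
def rho2 (r : ℝ) : ℝ := Real.smoothTransition (4 * r - 1)

lemma ehalf : 0 < expNegInvGlue (1 / 2) := expNegInvGlue.pos_of_pos (by norm_num)

lemma rho1_smooth : ContDiff ℝ (⊤ : ℕ∞) rho1 := by
  unfold rho1
  apply ContDiff.div_const
  apply expNegInvGlue.contDiff.comp
  fun_prop

lemma rho2_smooth : ContDiff ℝ (⊤ : ℕ∞) rho2 := by
  unfold rho2
  apply Real.smoothTransition.contDiff.comp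
  fun_prop

lemma rho1_zero (r : ℝ) (h : r ≤ 1 / 2) : rho1 r = 0 := by
  unfold rho1
  rw [expNegInvGlue.zero_of_nonpos (by linarith), zero_div]

lemma rho1_one : rho1 1 = 1 := by
  unfold rho1
  rw [show (1 : ℝ) - 1 / 2 = 1 / 2 by norm_num]
  exact div_self ehalf.ne'

lemma rho1_pos (r : ℝ) (h : 1 / 2 < r) : 0 < rho1 r :=
  div_pos (expNegInvGlue.pos_of_pos (by linarith)) ehalf

lemma rho1_nonneg (r : ℝ) : 0 ≤ rho1 r :=
  div_nonneg (expNegInvGlue.nonneg _) ehalf.le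

lemma rho1_le (r : ℝ) (h : r ≤ 1) : rho1 r ≤ 1 := by
  unfold rho1
  rw [div_le_one ehalf]
  exact expNegInvGlue.monotone (by linarith)

lemma rho1_deriv_zero (r : ℝ) (h : r ≤ 1 / 2) : deriv rho1 r = 0 := by
  apply IsLocalMin.deriv_eq_zero
  refine Filter.Eventually.of_forall fun y => ?_
  rw [rho1_zero r h]
  exact rho1_nonneg y

lemma rho1_deriv_pos (r : ℝ) (h : 1 / 2 < r) : 0 < deriv rho1 r := by
  obtain ⟨d, hd, hx⟩ := e_deriv_pos (r - 1 / 2) (by linarith)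
  have h1 : HasDerivAt rho1 (d * 1 / expNegInvGlue (1 / 2)) r :=
    (HasDerivAt.comp r hx ((hasDerivAt_id r).sub_const (1 / 2))).div_const _
  rw [h1.deriv]
  exact div_pos (by linarith) ehalf

lemma rho2_hasDeriv (r : ℝ) : HasDerivAt rho2 (deriv Real.smoothTransition (4 * r - 1) * 4) r := by
  have hst : Differentiable ℝ Real.smoothTransition :=
    (Real.smoothTransition.contDiff (n := 1)).differentiable (by simp)
  have h1 : HasDerivAt (fun r : ℝ => 4 * r - 1) 4 r := by
    simpa using ((hasDerivAt_id r).const_mul 4).sub_const 1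
  exact HasDerivAt.comp r (hst _).hasDerivAt h1

lemma rho2_zero (r : ℝ) (h : r ≤ 1 / 4) : rho2 r = 0 :=
  Real.smoothTransition.zero_of_nonpos (by linarith)

lemma rho2_one (r : ℝ) (h : 1 / 2 ≤ r) : rho2 r = 1 :=
  Real.smoothTransition.one_of_one_le (by linarith)

lemma rho2_deriv_one (r : ℝ) (h : 1 / 2 ≤ r) : deriv rho2 r = 0 := by
  rw [(rho2_hasDeriv r).deriv, st_deriv_ge _ (by linarith), zero_mul]

lemma rho2_deriv_pos (r : ℝ) (h : 1 / 4 < r) (h' : r < 1 / 2) : 0 < deriv rho2 r := by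
  rw [(rho2_hasDeriv r).deriv]
  have := st_deriv_pos (4 * r - 1) (by linarith) (by linarith)
  linarith

def extF (c : ℝ) (h g : ℝ → ℝ) (x : E2) : ℝ :=
  c + rho2 ‖x‖ * (Ang h x - c) + rho1 ‖x‖ * (Ang g x - Ang h x)

lemma ext_zero (c : ℝ) (h g : ℝ → ℝ) (x : E2) (hx : ‖x‖ ≤ 1 / 4) : extF c h g x = c := by
  unfold extF
  rw [rho2_zero _ hx, rho1_zero _ (by linarith)]; ring

section
variable (c : ℝ) (h g : ℝ → ℝ) (hh : ContDiff ℝ (⊤ : ℕ∞) h) (hg : ContDiff ℝ (⊤ : ℕ∞) g)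
  (ph : Function.Periodic h (2 * Real.pi)) (pg : Function.Periodic g (2 * Real.pi))

lemma ext_smooth (hh : ContDiff ℝ (⊤ : ℕ∞) h) (hg : ContDiff ℝ (⊤ : ℕ∞) g)
  (ph : Function.Periodic h (2 * Real.pi)) (pg : Function.Periodic g (2 * Real.pi)) :
    ContDiff ℝ (⊤ : ℕ∞) (extF c h g) := by
  rw [contDiff_iff_contDiffAt]
  intro x
  by_cases hx : x = 0
  · refine (contDiffAt_const (c := c)).congr_of_eventuallyEq ?_
    rw [hx]
    filter_upwards [Metric.ball_mem_nhds (0 : E2) (show (0 : ℝ) < 1 / 4 by norm_num)] with y hy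
    exact ext_zero c h g y (by simpa using (mem_ball_zero_iff.1 hy).le)
  · have hn : ContDiffAt ℝ (⊤ : ℕ∞) (fun x : E2 => ‖x‖) x := contDiffAt_norm ℝ hx
    have r1 : ContDiffAt ℝ (⊤ : ℕ∞) (fun x : E2 => rho1 ‖x‖) x :=
      rho1_smooth.contDiffAt.comp x hn
    have r2 : ContDiffAt ℝ (⊤ : ℕ∞) (fun x : E2 => rho2 ‖x‖) x :=
      rho2_smooth.contDiffAt.comp x hn
    have a1 := Ang_smooth h hh ph x hx
    have a2 := Ang_smooth g hg pg x hx
    exact (contDiffAt_const.add (r2.mul (a1.sub contDiffAt_const))).add (r1.mul (a2.sub a1))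

lemma ext_polar (ph : Function.Periodic h (2 * Real.pi)) (pg : Function.Periodic g (2 * Real.pi))
    (r t : ℝ) (hr : 0 < r) :
    extF c h g (r • sphPt t) = c + rho2 r * (h t - c) + rho1 r * (g t - h t) := by
  unfold extF
  rw [Ang_smul h ph r hr, Ang_smul g pg r hr, norm_smul, norm_sphPt, mul_one,
    Real.norm_of_nonneg hr.le]

lemma ext_tan (hh : ContDiff ℝ (⊤ : ℕ∞) h) (hg : ContDiff ℝ (⊤ : ℕ∞) g)
  (ph : Function.Periodic h (2 * Real.pi)) (pg : Function.Periodic g (2 * Real.pi))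
    (r t : ℝ) (hr : 0 < r) :
    fderiv ℝ (extF c h g) (r • sphPt t) (r • tanPt t) =
      rho2 r * deriv h t + rho1 r * (deriv g t - deriv h t) := by
  have h1 := hasDerivAt_tan (extF c h g)
    ((ext_smooth c h g hh hg ph pg).differentiable (by simp)) r t
  have e : (fun t => extF c h g (r • sphPt t)) =
      fun t => c + rho2 r * (h t - c) + rho1 r * (g t - h t) :=
    funext fun t => ext_polar c h g ph pg r t hr
  rw [e] at h1
  have dh : HasDerivAt h (deriv h t) t := (hh.differentiable (by simp) t).hasDerivAt
  have dg : HasDerivAt g (deriv g t) t := (hg.differentiable (by simp) t).hasDerivAt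
  exact h1.unique ((((dh.sub_const c).const_mul (rho2 r)).const_add c).add
    ((dg.sub dh).const_mul (rho1 r)))

lemma ext_rad (hh : ContDiff ℝ (⊤ : ℕ∞) h) (hg : ContDiff ℝ (⊤ : ℕ∞) g)
  (ph : Function.Periodic h (2 * Real.pi)) (pg : Function.Periodic g (2 * Real.pi))
    (r t : ℝ) (hr : 0 < r) :
    fderiv ℝ (extF c h g) (r • sphPt t) (sphPt t) =
      deriv rho2 r * (h t - c) + deriv rho1 r * (g t - h t) := by
  have h1 := hasDerivAt_rad (extF c h g)
    ((ext_smooth c h g hh hg ph pg).differentiable (by simp)) r t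
  have e : (fun r => extF c h g (r • sphPt t)) =ᶠ[𝓝 r]
      fun r => c + rho2 r * (h t - c) + rho1 r * (g t - h t) := by
    filter_upwards [lt_mem_nhds hr] with s hs
    exact ext_polar c h g ph pg s t hs
  have h1 := h1.congr_of_eventuallyEq e.symm
  have d1 : HasDerivAt rho1 (deriv rho1 r) r := (rho1_smooth.differentiable (by simp) r).hasDerivAt
  have d2 : HasDerivAt rho2 (deriv rho2 r) r := (rho2_smooth.differentiable (by simp) r).hasDerivAt
  exact h1.unique (((d2.mul_const (h t - c)).const_add c).add (d1.mul_const (g t - h t)))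

end

namespace Ribbon
variable {n : ℕ} (a : Ribbon n)

lemma upper (hpos : ∀ i, a.ν i = 1) (A : Finset ℝ) (hA : ∀ m : ℤ, ∃ x ∈ A,
      min (a.g (a.T m)) (a.g (a.T (m + 1))) < x ∧ x < max (a.g (a.T m)) (a.g (a.T (m + 1)))) :
    ∃ f : E2 → ℝ, IsExtension a f ∧ f '' critPts f ⊆ A := by
  obtain ⟨h, hh, ph, hz, hmul, hnode⟩ := a.exists_g1 A hA
  obtain ⟨c, hc, -⟩ := hA 0
  have hg := a.smooth_g
  have pg := a.periodic_g
  have outer : ∀ r t : ℝ, 1 / 2 < r → r ≤ 1 → fderiv ℝ (extF c h a.g) (r • sphPt t) ≠ 0 := by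
    intro r t h1 h2 h0
    have e1 := ext_tan c h a.g hh hg ph pg r t (by linarith)
    have e2 := ext_rad c h a.g hh hg ph pg r t (by linarith)
    rw [h0] at e1 e2
    simp only [zero_apply] at e1 e2
    rw [rho2_one r h1.le] at e1
    rw [rho2_deriv_one r h1.le] at e2
    have p1 := rho1_pos r h1
    have p2 := rho1_le r h2
    have p3 := rho1_deriv_pos r h1
    have hm := hmul t
    have hg0 : deriv a.g t = 0 := by
      have : rho1 r * (deriv a.g t * deriv a.g t) ≤ 0 := by
        have h3 : (1 - rho1 r) * (deriv h t * deriv a.g t) + rho1 r * (deriv a.g t * deriv a.g t)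
            = 0 := by linear_combination -(deriv a.g t) * e1
        have := mul_nonneg (sub_nonneg.2 p2) hm
        linarith
      have h4 : deriv a.g t * deriv a.g t ≤ 0 := by
        by_contra h5
        push Not at h5
        have := mul_pos p1 h5
        linarith
      exact mul_self_eq_zero.1 (le_antisymm h4 (mul_self_nonneg _))
    obtain ⟨m, rfl⟩ := (a.g'_zero_iff t).1 hg0
    have h5 : a.g (a.T m) - h (a.T m) = 0 := by
      have : deriv rho1 r * (a.g (a.T m) - h (a.T m)) = 0 := by linarith
      exact (mul_eq_zero.1 this).resolve_left p3.ne'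
    by_cases hs : deriv (deriv a.g) (a.T m) < 0
    · linarith [(hnode m).1 hs]
    · linarith [(hnode m).2 (a.pos_of_not m hs)]
  have radial : ∀ t, ⟪gradient (extF c h a.g) (sphPt t), sphPt t⟫ =
      deriv rho1 1 * (a.g t - h t) := by
    intro t
    have e2 := ext_rad c h a.g hh hg ph pg 1 t one_pos
    rw [rho2_deriv_one 1 (by norm_num), one_smul] at e2
    unfold gradient
    rw [InnerProductSpace.toDual_symm_apply, e2]; ring
  have p3 := rho1_deriv_pos 1 (by norm_num)
  refine ⟨extF c h a.g, ⟨ext_smooth c h a.g hh hg ph pg, ?_, ?_, ?_⟩, ?_⟩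
  · intro t
    have := ext_polar c h a.g ph pg 1 t one_pos
    rw [one_smul, rho1_one, rho2_one 1 (by norm_num)] at this
    rw [this]; ring
  · intro x hx
    obtain ⟨t, ht⟩ := exists_sphPt x
    rw [mem_sphere_zero_iff_norm.1 hx] at ht
    rw [ht]
    exact outer 1 t (by norm_num) le_rfl
  · intro i
    have hi := hnode (i : ℕ)
    rw [T_coe] at hi
    rw [radial, hpos i]
    push_cast
    constructor
    · intro hs
      have := hi.1 hs
      have := mul_pos p3 (sub_pos.2 this)
      linarith
    · intro hs
      have := hi.2 hs
      have := mul_pos p3 (sub_pos.2 this)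
      linarith
  · rintro _ ⟨x, ⟨hx, hx0⟩, rfl⟩
    rw [mem_ball_zero_iff] at hx
    obtain ⟨t, ht⟩ := exists_sphPt x
    rcases le_or_gt ‖x‖ (1 / 4) with h1 | h1
    · rw [ext_zero c h a.g x h1]; exact hc
    · set r := ‖x‖ with hr
      have hr0 : 0 < r := by linarith
      rw [ht] at hx0 ⊢
      have h2 : r ≤ 1 / 2 := by
        by_contra h2
        push Not at h2
        exact outer r t h2 hx.le hx0
      have e1 := ext_tan c h a.g hh hg ph pg r t hr0
      have e2 := ext_rad c h a.g hh hg ph pg r t hr0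
      rw [hx0] at e1 e2
      simp only [zero_apply] at e1 e2
      rw [ext_polar c h a.g ph pg r t hr0, rho1_zero r h2]
      rw [rho1_zero r h2] at e1
      rw [rho1_deriv_zero r h2] at e2
      rcases lt_or_eq_of_le h2 with h3 | h3
      · have p := rho2_deriv_pos r h1 h3
        have : h t - c = 0 := by
          have : deriv rho2 r * (h t - c) = 0 := by linarith
          exact (mul_eq_zero.1 this).resolve_left p.ne'
        rw [this, mul_zero, zero_mul, add_zero, add_zero]; exact hc
      · rw [rho2_one r h3.ge] at e1 ⊢
        have := hz t (by linarith)
        have e : c + 1 * (h t - c) + 0 * (a.g t - h t) = h t := by ring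
        rw [e]
        exact this

lemma exists_opt (hn : 4 ≤ n) (hpos : ∀ i, a.ν i = 1) : ∃ f : E2 → ℝ, IsExtension a f ∧
      (f '' critPts f).encard = ((clusterNumber a : ℕ) : ℕ∞) := by
  classical
  have hne : {k : ℕ | ∃ A : Finset ℝ, A.card = k ∧
    ∀ i : Fin n, ∃ x ∈ A, x ∈ Set.uIcc (a.g (a.θ i)) (a.g (a.θ (a.next i)))}.Nonempty :=
    ⟨_, Finset.univ.image (fun i => a.g (a.θ i)), rfl, fun i =>
      ⟨a.g (a.θ i), Finset.mem_image_of_mem _ (Finset.mem_univ i), Set.left_mem_uIcc⟩⟩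
  obtain ⟨A, hAc, hA⟩ := Nat.sInf_mem hne
  obtain ⟨A', hc, hA'⟩ := a.perturb A hA
  obtain ⟨f, hf, hsub⟩ := a.upper hpos A' hA'
  refine ⟨f, hf, le_antisymm ?_ (a.lower hn hpos f hf)⟩
  refine (Set.encard_le_encard hsub).trans ?_
  rw [Set.encard_coe_eq_coe_finsetCard]
  have : A'.card ≤ clusterNumber a := hc.trans hAc.le
  exact_mod_cast this

end Ribbon


/-- For a ribbon `a` with `n ≥ 4` nodes, all positive, `β(a) = δ(a)`: every extension of `a`
attains at least `δ(a)` distinct values on its critical set in the open unit disk, and some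
extension attains exactly `δ(a)` distinct critical values. -/
theorem stmt_7 (n : ℕ) (hn : 4 ≤ n) (a : Ribbon n) (hpos : ∀ i, a.ν i = 1) :
    (∀ f : E2 → ℝ, IsExtension a f →
      ((clusterNumber a : ℕ) : ℕ∞) ≤ (f '' critPts f).encard) ∧
    (∃ f : E2 → ℝ, IsExtension a f ∧
      (f '' critPts f).encard = ((clusterNumber a : ℕ) : ℕ∞)) ∧
    betaR a = ((clusterNumber a : ℕ) : ℕ∞) := by
  refine ⟨fun f hf => a.lower hn hpos f hf, a.exists_opt hn hpos, le_antisymm ?_ ?_⟩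
  · exact sInf_le (a.exists_opt hn hpos)
  · refine le_sInf ?_
    rintro k ⟨f, hf, rfl⟩
    exact a.lower hn hpos f hf
end
end

section
/- Let a be a ribbon with signature σ = σ(a), and let f be an extension of a all of whose critical points in the open unit disk are nondegenerate (invertible Hessian), with exactly m critical points, m finite. Then m ≥ |1 − σ/2| and m ≡ 1 − σ/2 (mod 2). -/
open scoped RealInnerProductSpace

noncomputable section

section
open Complex ComplexConjugate

lemma log_base (F : ℂ → ℂ) (hF : Continuous F) (h0 : ∀ z ∈ Metric.closedBall (0:ℂ) 1, F z ≠ 0) :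
    ∃ l : ℂ → ℂ, ContinuousOn l (Metric.sphere 0 1) ∧ ∀ z ∈ Metric.sphere (0:ℂ) 1, F z = exp (l z) := by
  have hc : IsCompact (Metric.closedBall (0:ℂ) 1) := isCompact_closedBall _ _
  obtain ⟨z0, hz0, hmin⟩ := hc.exists_isMinOn ⟨0, by simp⟩ (hF.norm.continuousOn)
  have hc0 : 0 < ‖F z0‖ := norm_pos_iff.2 (h0 z0 hz0)
  have huc := hc.uniformContinuousOn_of_continuous hF.continuousOn
  rw [Metric.uniformContinuousOn_iff] at huc
  obtain ⟨δ, hδ, hu⟩ := huc _ hc0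
  obtain ⟨N, hN⟩ := exists_nat_one_div_lt hδ
  have hN1 : (0:ℝ) < (N:ℝ) + 1 := by positivity
  have hmem : ∀ k : ℕ, k ≤ N + 1 → ∀ z ∈ Metric.sphere (0:ℂ) 1,
      ((k:ℝ)/((N:ℝ)+1) : ℝ) * z ∈ Metric.closedBall (0:ℂ) 1 := by
    intro k hk z hz
    simp only [mem_sphere_iff_norm, sub_zero] at hz
    rw [mem_closedBall_zero_iff, norm_mul, hz, mul_one, norm_real, Real.norm_eq_abs,
      abs_of_nonneg (by positivity), div_le_one hN1]
    exact_mod_cast hk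
  let q : ℕ → ℂ → ℂ := fun k z => F (((k:ℝ)/((N:ℝ)+1) : ℝ) * z)
  have hqc : ∀ k, Continuous (q k) := fun k => hF.comp (continuous_const.mul continuous_id)
  have hq0 : ∀ k : ℕ, k ≤ N + 1 → ∀ z ∈ Metric.sphere (0:ℂ) 1, q k z ≠ 0 :=
    fun k hk z hz => h0 _ (hmem k hk z hz)
  have hslit : ∀ k : ℕ, k ≤ N → ∀ z ∈ Metric.sphere (0:ℂ) 1, q (k+1) z / q k z ∈ slitPlane := by
    intro k hk z hz
    have key : ‖q (k+1) z / q k z - 1‖ < 1 → q (k+1) z / q k z ∈ slitPlane := fun h => by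
      simpa using mem_slitPlane_of_norm_lt_one h
    apply key
    have hne := hq0 k (by omega) z hz
    rw [div_sub_one hne, norm_div, div_lt_one (norm_pos_iff.2 hne)]
    refine lt_of_lt_of_le ?_ (hmin (hmem k (by omega) z hz))
    rw [← dist_eq_norm]
    apply hu _ (hmem (k+1) (by omega) z hz) _ (hmem k (by omega) z hz)
    have hz' := hz
    simp only [mem_sphere_iff_norm, sub_zero] at hz'
    rw [dist_eq_norm, ← sub_mul, norm_mul, hz', mul_one, ← ofReal_sub, norm_real, Real.norm_eq_abs]
    have : ((k+1:ℕ):ℝ)/((N:ℝ)+1) - (k:ℝ)/((N:ℝ)+1) = 1/((N:ℝ)+1) := by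
      push_cast; ring
    rw [this, abs_of_pos (by positivity)]; exact hN
  refine ⟨fun z => log (F 0) + ∑ k ∈ Finset.range (N+1), log (q (k+1) z / q k z), ?_, ?_⟩
  · refine continuousOn_const.add (continuousOn_finsetSum _ fun k hk => ?_)
    have hk' : k ≤ N := by have := Finset.mem_range.1 hk; omega
    refine ContinuousOn.clog ?_ (hslit k hk')
    exact (hqc _).continuousOn.div (hqc _).continuousOn (hq0 k (by omega))
  · intro z hz
    rw [exp_add, exp_log (h0 0 (by simp)), exp_sum]
    have : ∀ M, M ≤ N + 1 → F 0 * ∏ k ∈ Finset.range M, exp (log (q (k+1) z / q k z)) = q M z := by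
      intro M
      induction M with
      | zero => intro _; simp [q]
      | succ M ih =>
        intro hM
        rw [Finset.prod_range_succ, ← mul_assoc, ih (by omega), exp_log, mul_div_cancel₀]
        · exact hq0 M (by omega) z hz
        · exact slitPlane_ne_zero (hslit M (by omega) z hz)
    rw [this _ le_rfl]
    simp only [q]
    congr 1
    have : ((N:ℝ)+1) ≠ 0 := hN1.ne'
    push_cast
    rw [div_self (by exact_mod_cast this), one_mul]

/-- removal of a single zero -/
lemma remove_zero (F p : ℂ → ℂ) (hF : Continuous F) (hp : Continuous p) (s : ℂ)
    (hps : ∀ z, z ≠ s → p z ≠ 0) (hp0 : p s = 0) (a : ℂ) (ha : a ≠ 0) (δ : ℝ) (hδ : 0 < δ)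
    (hloc : ∀ z, z ≠ s → dist z s < δ → ‖F z / p z - a‖ < ‖a‖) :
    ∃ G : ℂ → ℂ, Continuous G ∧ (∀ z, δ ≤ dist z s → G z = F z / p z) ∧
      (∀ z, dist z s < δ → G z ≠ 0) := by
  refine ⟨fun z => a + ((min 1 (dist z s / δ) : ℝ) : ℂ) * (F z / p z - a), ?_, ?_, ?_⟩
  · rw [continuous_iff_continuousAt]
    intro z
    by_cases hz : z = s
    · subst hz
      rw [Metric.continuousAt_iff]
      intro ε hε
      refine ⟨min δ (δ * (ε / ‖a‖)), ?_, ?_⟩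
      · have : 0 < ‖a‖ := norm_pos_iff.2 ha
        positivity
      · intro x hx
        have h1 := lt_of_lt_of_le hx (min_le_left _ _)
        have h2 := lt_of_lt_of_le hx (min_le_right _ _)
        have hap : 0 < ‖a‖ := norm_pos_iff.2 ha
        simp only [dist_self, zero_div, min_eq_right zero_le_one, ofReal_zero, zero_mul, add_zero]
        by_cases hxz : x = z
        · subst hxz; simpa using hε
        have h3 := hloc x hxz h1
        rw [dist_eq_norm, add_sub_cancel_left, norm_mul, norm_real, Real.norm_eq_abs,
          abs_of_nonneg (by positivity)]
        have h4 : min 1 (dist x z / δ) ≤ dist x z / δ := min_le_right _ _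
        have h5 : dist x z / δ < ε / ‖a‖ := by
          rw [div_lt_iff₀ hδ]; linarith
        calc min 1 (dist x z / δ) * ‖F x / p x - a‖ ≤ (dist x z / δ) * ‖a‖ := by gcongr
          _ < (ε / ‖a‖) * ‖a‖ := by gcongr
          _ = ε := by field_simp
    · have : ContinuousAt (fun z => F z / p z) z := hF.continuousAt.div hp.continuousAt (hps z hz)
      have h2 : Continuous fun z : ℂ => ((min 1 (dist z s / δ) : ℝ) : ℂ) := by fun_prop
      exact continuousAt_const.add (h2.continuousAt.mul (this.sub continuousAt_const))
  · intro z hz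
    have : min 1 (dist z s / δ) = 1 := min_eq_left (by rwa [le_div_iff₀ hδ, one_mul])
    simp [this]
  · intro z hz h
    by_cases hzs : z = s
    · subst hzs; simp at h; exact ha h
    have h3 := hloc z hzs hz
    have h4 : a = -(((min 1 (dist z s / δ) : ℝ) : ℂ) * (F z / p z - a)) := eq_neg_of_add_eq_zero_left h
    have h5 : ‖a‖ = min 1 (dist z s / δ) * ‖F z / p z - a‖ := by
      conv_lhs => rw [h4]
      rw [norm_neg, norm_mul, norm_real, Real.norm_eq_abs, abs_of_nonneg (by positivity)]
    have h6 : min 1 (dist z s / δ) ≤ 1 := min_le_left _ _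
    nlinarith [norm_nonneg (F z / p z - a)]

lemma lin_decomp (A : ℂ →L[ℝ] ℂ) (hA : Function.Injective A) :
    ∃ a b : ℂ, (∀ w, A w = a * w + b * conj w) ∧ ‖a‖ ≠ ‖b‖ := by
  refine ⟨(A 1 - I * A I)/2, (A 1 + I * A I)/2, ?_, ?_⟩
  · intro w
    have : A w = w.re * A 1 + w.im * A I := by
      conv_lhs => rw [show w = w.re • (1:ℂ) + w.im • I by simp [re_add_im]]
      rw [map_add, map_smul, map_smul]; simp
    have hw : w = w.re + w.im * I := (re_add_im w).symm
    have hcw : conj w = w.re - w.im * I := by apply Complex.ext <;> simp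
    rw [this, hcw]
    conv_rhs => rw [hw]
    simp only [add_re, ofReal_re, mul_re, I_re, mul_zero, ofReal_im, I_im, mul_one, sub_self, add_zero, add_im, mul_im, zero_add]
    linear_combination ((w.im:ℂ) * A I) * I_sq
  · generalize ha : (A 1 - I * A I)/2 = a
    generalize hb : (A 1 + I * A I)/2 = b
    have h1 : A 1 = a + b := by rw [← ha, ← hb]; ring
    have h2 : A I = I * (a - b) := by
      rw [← ha, ← hb]; linear_combination (A I) * I_sq
    intro hab
    have hdec : ∀ w, A w = a * w + b * conj w := by
      intro w
      have : A w = w.re * A 1 + w.im * A I := by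
        conv_lhs => rw [show w = w.re • (1:ℂ) + w.im • I by simp [re_add_im]]
        rw [map_add, map_smul, map_smul]; simp
      have hw : w = w.re + w.im * I := (re_add_im w).symm
      have hcw : conj w = w.re - w.im * I := by apply Complex.ext <;> simp
      rw [this, hcw, h1, h2]
      linear_combination -a * hw
    by_cases ha0 : a = 0
    · have hb0 : b = 0 := by rw [← norm_eq_zero, ← hab, ha0, norm_zero]
      have : A 1 = A 0 := by rw [h1, ha0, hb0]; simp
      exact one_ne_zero (hA this)
    · obtain ⟨w, hw⟩ := IsAlgClosed.exists_pow_nat_eq (-b/a) (n := 2) (by norm_num)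
      have hn : ‖w‖ = 1 := by
        have : ‖w‖^2 = 1 := by
          rw [← norm_pow, hw, norm_div, norm_neg, hab, div_self]
          rw [← hab]; exact norm_ne_zero_iff.2 ha0
        nlinarith [norm_nonneg w]
      have hww : w * conj w = 1 := by rw [mul_conj, normSq_eq_norm_sq, hn]; simp
      have : A w = A 0 := by
        rw [hdec, map_zero]
        have h3 : a * w^2 = -b := by rw [hw]; field_simp
        linear_combination (conj w) * h3 - a * w * hww
      have h0 := hA this
      rw [h0] at hn; simp at hn

lemma loc_est (F : ℂ → ℂ) (s : ℂ) (A : ℂ →L[ℝ] ℂ) (hA : Function.Injective A)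
    (hd : HasFDerivAt F A s) (hs : F s = 0) :
    ∃ a : ℂ, a ≠ 0 ∧ ((∀ᶠ z in nhds s, z ≠ s → ‖F z / (z - s) - a‖ < ‖a‖) ∨
      (∀ᶠ z in nhds s, z ≠ s → ‖F z / conj (z - s) - a‖ < ‖a‖)) := by
  obtain ⟨a, b, hab, hne⟩ := lin_decomp A hA
  have hlo := hasFDerivAt_iff_isLittleO.1 hd
  rcases lt_or_gt_of_ne hne with h | h
  · refine ⟨b, fun hb => ?_, Or.inr ?_⟩
    · rw [hb, norm_zero] at h; exact absurd (norm_nonneg a) (not_le.2 h)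
    have hpos : 0 < (‖b‖ - ‖a‖)/2 := by linarith
    filter_upwards [hlo.def hpos] with z hz hzs
    have hz0 : 0 < ‖z - s‖ := norm_pos_iff.2 (sub_ne_zero.2 hzs)
    have hc0 : conj (z - s) ≠ 0 := by
      rw [ne_eq, map_eq_zero]; exact sub_ne_zero.2 hzs
    rw [div_sub' hc0, norm_div, RCLike.norm_conj, div_lt_iff₀ hz0]
    rw [hs, sub_zero, hab] at hz
    calc ‖F z - conj (z-s) * b‖ = ‖(F z - (a * (z-s) + b * conj (z-s))) + a * (z - s)‖ := by
          congr 1; ring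
      _ ≤ (‖b‖ - ‖a‖)/2 * ‖z-s‖ + ‖a‖ * ‖z - s‖ := by
          refine (norm_add_le _ _).trans ?_
          rw [norm_mul]; gcongr
      _ < ‖b‖ * ‖z-s‖ := by nlinarith
  · refine ⟨a, fun hb => ?_, Or.inl ?_⟩
    · rw [hb, norm_zero] at h; exact absurd (norm_nonneg b) (not_le.2 h)
    have hpos : 0 < (‖a‖ - ‖b‖)/2 := by linarith
    filter_upwards [hlo.def hpos] with z hz hzs
    have hz0 : 0 < ‖z - s‖ := norm_pos_iff.2 (sub_ne_zero.2 hzs)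
    rw [div_sub' (sub_ne_zero.2 hzs), norm_div, div_lt_iff₀ hz0]
    rw [hs, sub_zero, hab] at hz
    calc ‖F z - (z-s) * a‖ = ‖(F z - (a * (z-s) + b * conj (z-s))) + b * conj (z - s)‖ := by
          congr 1; ring
      _ ≤ (‖a‖ - ‖b‖)/2 * ‖z-s‖ + ‖b‖ * ‖z - s‖ := by
          refine (norm_add_le _ _).trans ?_
          rw [norm_mul, RCLike.norm_conj]; gcongr
      _ < ‖a‖ * ‖z-s‖ := by nlinarith

lemma slit_one_sub (w : ℂ) (hw : ‖w‖ < 1) : 1 - w ∈ slitPlane := by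
  rw [sub_eq_add_neg]
  exact mem_slitPlane_of_norm_lt_one (by rwa [norm_neg])

/-- logs of the factors on the circle -/
lemma factor_log (s : ℂ) (hs : ‖s‖ < 1) :
    (∃ l : ℂ → ℂ, ContinuousOn l (Metric.sphere 0 1) ∧ ∀ z ∈ Metric.sphere (0:ℂ) 1,
      z - s = z ^ (1:ℤ) * exp (l z)) ∧
    (∃ l : ℂ → ℂ, ContinuousOn l (Metric.sphere 0 1) ∧ ∀ z ∈ Metric.sphere (0:ℂ) 1,
      conj (z - s) = z ^ (-1:ℤ) * exp (l z)) := by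
  constructor
  · have hsl : ∀ z ∈ Metric.sphere (0:ℂ) 1, 1 - s / z ∈ slitPlane := by
      intro z hz
      simp only [mem_sphere_iff_norm, sub_zero] at hz
      apply slit_one_sub; rw [norm_div, hz, div_one]; exact hs
    refine ⟨fun z => log (1 - s / z), ?_, ?_⟩
    · refine ContinuousOn.clog ?_ hsl
      refine continuousOn_const.sub (continuousOn_const.div continuousOn_id ?_)
      intro z hz h
      simp only [mem_sphere_iff_norm, sub_zero] at hz
      change z = 0 at h
      rw [h] at hz; simp at hz
    · intro z hz
      have := slitPlane_ne_zero (hsl z hz)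
      simp only [mem_sphere_iff_norm, sub_zero] at hz
      have hz0 : z ≠ 0 := by rintro rfl; simp at hz
      rw [exp_log this, zpow_one]; field_simp
  · have hsl : ∀ z ∈ Metric.sphere (0:ℂ) 1, 1 - conj s * z ∈ slitPlane := by
      intro z hz
      simp only [mem_sphere_iff_norm, sub_zero] at hz
      apply slit_one_sub; rw [norm_mul, hz, mul_one, RCLike.norm_conj]; exact hs
    refine ⟨fun z => log (1 - conj s * z), ?_, ?_⟩
    · refine ContinuousOn.clog ?_ hsl
      fun_prop
    · intro z hz
      have := slitPlane_ne_zero (hsl z hz)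
      simp only [mem_sphere_iff_norm, sub_zero] at hz
      have hz0 : z ≠ 0 := by rintro rfl; simp at hz
      have hww : z * conj z = 1 := by rw [mul_conj, normSq_eq_norm_sq, hz]; simp
      rw [exp_log this, zpow_neg_one, map_sub]
      field_simp
      linear_combination hww

lemma core_s9 (S : Finset ℂ) : ∀ (F : ℂ → ℂ), Continuous F → (∀ s ∈ S, ‖s‖ < 1) →
    (∀ z ∈ Metric.closedBall (0:ℂ) 1, z ∉ S → F z ≠ 0) →
    (∀ s ∈ S, F s = 0 ∧ ∃ A : ℂ →L[ℝ] ℂ, Function.Injective A ∧ HasFDerivAt F A s) →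
    ∃ K : ℤ, K.natAbs ≤ S.card ∧ Int.ModEq 2 (S.card : ℤ) K ∧
    ∃ l : ℂ → ℂ, ContinuousOn l (Metric.sphere 0 1) ∧
      ∀ z ∈ Metric.sphere (0:ℂ) 1, F z = z ^ K * exp (l z) := by
  induction S using Finset.induction_on with
  | empty =>
    intro F hF _ h0 _
    obtain ⟨l, hl, h⟩ := log_base F hF (fun z hz => h0 z hz (by simp))
    exact ⟨0, by simp, by simp, l, hl, fun z hz => by simp [h z hz]⟩
  | insert s S hsS ih =>
    intro F hF hS h0 hd
    obtain ⟨hFs, A, hAi, hA⟩ := hd s (by simp)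
    have hs1 := hS s (by simp)
    obtain ⟨a, ha, hor⟩ := loc_est F s A hAi hA hFs
    have main : ∀ (p : ℂ → ℂ) (e : ℤ), e.natAbs = 1 → Continuous p → Differentiable ℝ p →
        p s = 0 → (∀ z, z ≠ s → p z ≠ 0) →
        (∀ᶠ z in nhds s, z ≠ s → ‖F z / p z - a‖ < ‖a‖) →
        (∃ l : ℂ → ℂ, ContinuousOn l (Metric.sphere 0 1) ∧ ∀ z ∈ Metric.sphere (0:ℂ) 1,
          p z = z ^ e * exp (l z)) → 
        ∃ K : ℤ, K.natAbs ≤ (insert s S).card ∧ Int.ModEq 2 ((insert s S).card : ℤ) K ∧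
        ∃ l : ℂ → ℂ, ContinuousOn l (Metric.sphere 0 1) ∧
          ∀ z ∈ Metric.sphere (0:ℂ) 1, F z = z ^ K * exp (l z) := by
      intro p e he hp hpd hps hpne hloc ⟨l1, hl1, hl1'⟩
      have hfar : ∀ᶠ z in nhds s, z ∉ S ∧ ‖z‖ < 1 := by
        refine Filter.Eventually.and ?_ ?_
        · exact S.finite_toSet.isClosed.isOpen_compl.mem_nhds (by simpa using hsS)
        · exact (continuous_norm.continuousAt).eventually_lt continuousAt_const hs1
      obtain ⟨δ, hδ, hball⟩ := Metric.eventually_nhds_iff.1 (hloc.and hfar)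
      obtain ⟨G, hG, hGout, hGin⟩ := remove_zero F p hF hp s hpne hps a ha (δ/2) (by linarith)
        (fun z hz hzd => (hball (by linarith)).1 hz)
      have hfarS : ∀ t ∈ S, δ ≤ dist t s := by
        intro t ht
        by_contra hlt
        exact (hball (not_le.1 hlt)).2.1 ht
      have hGeq : ∀ t ∈ S, G =ᶠ[nhds t] fun z => F z * (p z)⁻¹ := by
        intro t ht
        have h2 : δ/2 < dist t s := by have := hfarS t ht; linarith
        have : ∀ᶠ z in nhds t, δ/2 < dist z s :=
          continuousAt_const.eventually_lt (f := fun _ => δ/2) (g := fun z => dist z s) (by fun_prop) h2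
        filter_upwards [this] with z hz
        rw [hGout z hz.le, div_eq_mul_inv]
      obtain ⟨K, hK1, hK2, l, hl, hKl⟩ := ih G hG (fun t ht => hS t (by simp [ht])) (by
          intro z hz hzS
          by_cases hzd : dist z s < δ/2
          · exact hGin z hzd
          · have hzs : z ≠ s := by
              rintro rfl; rw [dist_self] at hzd; linarith
            rw [hGout z (not_lt.1 hzd)]
            exact div_ne_zero (h0 z hz (by simp [hzs, hzS])) (hpne z hzs)) (by
          intro t ht
          obtain ⟨hFt, B, hBi, hB⟩ := hd t (by simp [ht])
          have hts : t ≠ s := by rintro rfl; exact hsS ht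
          have hpt := hpne t hts
          refine ⟨by rw [(hGeq t ht).eq_of_nhds, hFt, zero_mul], (p t)⁻¹ • B, ?_, ?_⟩
          · intro x y hxy
            apply hBi
            simpa [hpt] using hxy
          · have hinv : DifferentiableAt ℝ (fun z => (p z)⁻¹) t := (hpd t).inv hpt
            have := (hB.mul hinv.hasFDerivAt).congr_of_eventuallyEq (hGeq t ht)
            rwa [hFt, zero_smul, zero_add] at this)
      refine ⟨K + e, ?_, ?_, fun z => l z + l1 z, hl.add hl1, ?_⟩
      · rw [Finset.card_insert_of_notMem hsS]
        have := Int.natAbs_add_le K e; omega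
      · rw [Finset.card_insert_of_notMem hsS]
        push_cast
        refine hK2.add ?_
        rcases Int.natAbs_eq e with h | h <;> rw [h, he] <;> decide
      · intro z hz
        have hzd : δ / 2 ≤ dist z s := by
          by_contra hlt
          have := (hball (y := z) (by linarith)).2.2
          simp only [mem_sphere_iff_norm, sub_zero] at hz
          linarith
        have hzs : z ≠ s := by
          rintro rfl; rw [dist_self] at hzd; linarith
        have h1 : F z = G z * p z := by rw [hGout z hzd, div_mul_cancel₀ _ (hpne z hzs)]
        have hz0 : z ≠ 0 := by rintro rfl; simp at hz
        rw [h1, hKl z hz, hl1' z hz, zpow_add₀ hz0, exp_add]; ring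
    rcases hor with h | h
    · exact main (fun z => z - s) 1 rfl (by fun_prop) (by fun_prop) (by simp)
        (fun z hz => sub_ne_zero.2 hz) h (factor_log s hs1).1
    · refine main (fun z => conj (z - s)) (-1) rfl (by fun_prop) ?_ (by simp)
        (fun z hz => by rw [ne_eq, map_eq_zero]; exact sub_ne_zero.2 hz) h (factor_log s hs1).2
      intro z
      exact conjCLE.differentiableAt.comp z (by fun_prop)

end

lemma sign_of_deriv (U : ℝ → ℝ) (u x : ℝ) (h : HasDerivAt U u x) (hu : 0 < u) (h0 : U x = 0) :
    ∀ᶠ t in nhds x, (x < t → 0 < U t) ∧ (t < x → U t < 0) := by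
  have h1 := (hasDerivAt_iff_tendsto_slope.1 h).eventually (lt_mem_nhds hu)
  rw [eventually_nhdsWithin_iff] at h1
  filter_upwards [h1] with t ht
  constructor
  · intro hx
    have := ht hx.ne'
    rw [slope_def_field, h0, sub_zero] at this
    exact (div_pos_iff_of_pos_right (by linarith)).1 this
  · intro hx
    have := ht hx.ne
    rw [slope_def_field, h0, sub_zero] at this
    rcases div_pos_iff.1 this with h | h
    · linarith [h.2]
    · exact h.1

lemma count {n : ℕ} (θ : Fin n → ℝ) (ν : Fin n → ℤ) (T R Φ ρ : ℝ → ℝ) (c : Fin n → ℝ) (K : ℤ)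
    (hΦ : Continuous Φ) (hper : ∀ t, Φ (t + 2 * Real.pi) = Φ t + 2 * Real.pi * K)
    (hρ : ∀ t, 0 < ρ t) (hT : ∀ t, T t = ρ t * Real.sin (Φ t))
    (hR : ∀ t, R t = ρ t * Real.cos (Φ t)) (hTper : ∀ t, T (t + 2 * Real.pi) = T t)
    (hmem : ∀ i, θ i ∈ Set.Ico (0:ℝ) (2 * Real.pi)) (hinj : Function.Injective θ)
    (hν : ∀ i, ν i = 1 ∨ ν i = -1) (hT0 : ∀ i, T (θ i) = 0)
    (hcrit : ∀ t ∈ Set.Ico (0:ℝ) (2 * Real.pi), T t = 0 → ∃ i, t = θ i)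
    (hder : ∀ i, HasDerivAt T (c i) (θ i)) (hsign : ∀ i, (ν i : ℝ) * R (θ i) * c i < 0) :
    2 * K = - ∑ i, ν i := by
  have hpi := Real.pi_pos
  obtain ⟨δ, hδ, hδ2, hδn⟩ : ∃ δ > 0, δ < 2 * Real.pi ∧ ∀ i, θ i < 2 * Real.pi - δ := by
    have h1 : ∀ᶠ x in nhds (0:ℝ), ∀ i, θ i < 2 * Real.pi - x := by
      rw [Filter.eventually_all]
      intro i
      have : ContinuousAt (fun x : ℝ => 2 * Real.pi - x) 0 := by fun_prop
      exact continuousAt_const.eventually_lt this (by simpa using (hmem i).2)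
    have h2 : ∀ᶠ x in nhds (0:ℝ), x < 2 * Real.pi := Iio_mem_nhds (by positivity)
    obtain ⟨ε, hε, hb⟩ := Metric.eventually_nhds_iff.1 (h1.and h2)
    have h3 := @hb (ε/2) (by rw [Real.dist_eq, sub_zero, abs_of_pos (by linarith)]; linarith)
    exact ⟨ε/2, by linarith, h3.2, h3.1⟩
  set I := Set.Icc (-δ) (2 * Real.pi - δ) with hI
  have hcritI : ∀ t ∈ I, T t = 0 → ∃ i, t = θ i := by
    intro t ht h0
    by_cases h : 0 ≤ t
    · exact hcrit t ⟨h, by linarith [ht.2]⟩ h0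
    · obtain ⟨i, hi⟩ := hcrit (t + 2 * Real.pi) ⟨by linarith [ht.1], by linarith⟩ (by rw [hTper, h0])
      have := hδn i
      linarith [ht.1]
  let J : Fin n → ℝ → ℤ := fun i t => if t < θ i then 0 else if t = θ i then (ν i - 1)/2 else ν i
  have hJ : ∀ i x, x ≠ θ i → ∀ᶠ t in nhds x, J i t = J i x := by
    intro i x hx
    rcases lt_or_gt_of_ne hx with h | h
    · filter_upwards [Iio_mem_nhds h] with t ht
      have ht' : t < θ i := ht
      simp [J, ht', h]
    · filter_upwards [Ioi_mem_nhds h] with t ht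
      have ht' : θ i < t := ht
      simp [J, not_lt.2 ht'.le, not_lt.2 h.le, ht'.ne', h.ne']
  let M : ℝ → ℤ := fun t => ⌊Φ t / Real.pi⌋ + ∑ i, J i t
  have hfl : ∀ (k : ℤ) (y : ℝ), k * Real.pi ≤ y → y < (k+1) * Real.pi → ⌊y / Real.pi⌋ = k := by
    intro k y h1 h2
    rw [Int.floor_eq_iff, le_div_iff₀ hpi, div_lt_iff₀ hpi]
    exact ⟨h1, h2⟩
  have hM : ∀ x ∈ I, ∀ᶠ t in nhds x, M t = M x := by
    intro x hx
    by_cases h0 : T x = 0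
    · obtain ⟨j, rfl⟩ := hcritI x hx h0
      have hs0 : Real.sin (Φ (θ j)) = 0 := by
        have := hT (θ j); rw [h0] at this
        exact (mul_eq_zero.1 this.symm).resolve_left (hρ _).ne'
      obtain ⟨k, hk⟩ := Real.sin_eq_zero_iff.1 hs0
      have hrest : ∀ᶠ t in nhds (θ j), ∀ i ∈ Finset.univ.erase j, J i t = J i (θ j) := by
        rw [Filter.eventually_all_finset]
        intro i hi
        exact hJ i _ (fun h => (Finset.ne_of_mem_erase hi) (hinj h).symm)
      have hsg := sign_of_deriv (fun t => (-(ν j:ℝ) * R (θ j)) * T t) _ (θ j)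
        ((hder j).const_mul _) (by have := hsign j; nlinarith) (by simp [h0])
      have hc1 : ∀ᶠ t in nhds (θ j), Φ t < (k+1) * Real.pi :=
        hΦ.continuousAt.eventually_lt continuousAt_const (by rw [← hk]; nlinarith)
      have hc2 : ∀ᶠ t in nhds (θ j), (k-1) * Real.pi < Φ t :=
        continuousAt_const.eventually_lt hΦ.continuousAt (by rw [← hk]; nlinarith)
      filter_upwards [hrest, hsg, hc1, hc2] with t h1 h2 h3 h4
      have hkey : R (θ j) * T t = ρ (θ j) * ρ t * Real.sin (Φ t - k * Real.pi) := by
        rw [hk, Real.sin_sub, hs0, hT, hR]; ring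
      have hrr : 0 < ρ (θ j) * ρ t := mul_pos (hρ _) (hρ _)
      have hpos : 0 < R (θ j) * T t → k * Real.pi < Φ t := by
        intro h
        by_contra hle
        have : Real.sin (Φ t - k * Real.pi) ≤ 0 :=
          Real.sin_nonpos_of_nonpos_of_neg_pi_le (by linarith) (by linarith)
        rw [hkey] at h
        nlinarith
      have hneg : R (θ j) * T t < 0 → Φ t < k * Real.pi := by
        intro h
        by_contra hle
        have : 0 ≤ Real.sin (Φ t - k * Real.pi) :=
          Real.sin_nonneg_of_nonneg_of_le_pi (by linarith) (by linarith)
        rw [hkey] at h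
        nlinarith
      have hfx : ⌊Φ (θ j) / Real.pi⌋ = k := hfl k _ (by rw [hk]) (by rw [← hk]; nlinarith)
      have hup : k * Real.pi < Φ t → ⌊Φ t / Real.pi⌋ = k := fun h => hfl k _ h.le h3
      have hdn : Φ t < k * Real.pi → ⌊Φ t / Real.pi⌋ = k - 1 :=
        fun h => hfl (k-1) _ (by push_cast; exact h4.le) (by push_cast; linarith)
      have hmain : ⌊Φ t / Real.pi⌋ + J j t = ⌊Φ (θ j) / Real.pi⌋ + J j (θ j) := by
        rw [hfx]
        rcases lt_trichotomy t (θ j) with h | h | h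
        · have h5 := h2.2 h
          have hJt : J j t = 0 := by simp [J, h]
          have hJx : J j (θ j) = (ν j - 1)/2 := by simp [J]
          rw [hJt, hJx]
          rcases hν j with hn | hn <;> rw [hn] at h5 ⊢ <;> push_cast at h5
          · rw [hup (hpos (by linarith))]; norm_num
          · rw [hdn (hneg (by linarith))]; norm_num; ring
        · rw [h, hfx]
        · have h5 := h2.1 h
          have hJt : J j t = ν j := by simp [J, not_lt.2 h.le, h.ne']
          have hJx : J j (θ j) = (ν j - 1)/2 := by simp [J]
          rw [hJt, hJx]
          rcases hν j with hn | hn <;> rw [hn] at h5 ⊢ <;> push_cast at h5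
          · rw [hdn (hneg (by linarith))]; norm_num
          · rw [hup (hpos (by linarith))]; norm_num
      simp only [M]
      rw [← Finset.add_sum_erase _ _ (Finset.mem_univ j), ← Finset.add_sum_erase _ _ (Finset.mem_univ j),
        ← add_assoc, ← add_assoc, hmain, Finset.sum_congr rfl h1]
    · have hne : ∀ i, x ≠ θ i := by rintro i rfl; exact h0 (hT0 i)
      have hall : ∀ᶠ t in nhds x, ∀ i, J i t = J i x :=
        Filter.eventually_all.2 fun i => hJ i x (hne i)
      set k := ⌊Φ x / Real.pi⌋ with hk
      have hk1 : k * Real.pi ≤ Φ x := (le_div_iff₀ hpi).1 (Int.floor_le _)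
      have hk2 : Φ x < (k+1) * Real.pi := (div_lt_iff₀ hpi).1 (Int.lt_floor_add_one _)
      have hk1' : k * Real.pi < Φ x := lt_of_le_of_ne hk1 (fun h => h0 (by
        rw [hT, ← h, Real.sin_int_mul_pi, mul_zero]))
      have hc1 : ∀ᶠ t in nhds x, Φ t < (k+1) * Real.pi :=
        hΦ.continuousAt.eventually_lt continuousAt_const hk2
      have hc2 : ∀ᶠ t in nhds x, k * Real.pi < Φ t :=
        continuousAt_const.eventually_lt hΦ.continuousAt hk1'
      filter_upwards [hall, hc1, hc2] with t h1 h2 h3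
      simp only [M]
      rw [hfl k _ h3.le h2, ← hk, Finset.sum_congr rfl fun i _ => h1 i]
  have hcont : ContinuousOn M I := fun x hx =>
    (continuousAt_const.congr ((hM x hx).mono fun t ht => ht.symm)).continuousWithinAt
  have hconst := isPreconnected_Icc.constant hcont (x := -δ) (y := 2 * Real.pi - δ)
    ⟨le_rfl, by linarith⟩ ⟨by linarith, le_rfl⟩
  have hJ1 : ∀ i, J i (-δ) = 0 := fun i => by
    have := (hmem i).1
    simp [J, show -δ < θ i by linarith]
  have hJ2 : ∀ i, J i (2 * Real.pi - δ) = ν i := fun i => by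
    have := hδn i
    simp [J, not_lt.2 this.le, this.ne']
  have hP : ⌊Φ (2 * Real.pi - δ) / Real.pi⌋ = ⌊Φ (-δ) / Real.pi⌋ + 2 * K := by
    rw [show 2 * Real.pi - δ = -δ + 2 * Real.pi by ring, hper,
      show (Φ (-δ) + 2 * Real.pi * K) / Real.pi = Φ (-δ) / Real.pi + ((2 * K : ℤ) : ℝ) by
        push_cast; field_simp, Int.floor_add_intCast]
  simp only [M, hJ1, hJ2, hP, Finset.sum_const_zero] at hconst
  linarith

open Complex in
/-- the isometry between ℂ and the plane -/
def eC : ℂ ≃ₗᵢ[ℝ] E2 := Complex.orthonormalBasisOneI.repr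

lemma sphPt_eq (t : ℝ) : sphPt t = eC (Complex.exp (t * Complex.I)) := by
  ext i
  fin_cases i
  · simp [sphPt, eC, Complex.exp_re]
  · simp [sphPt, eC, Complex.exp_im]

lemma eC_dec (w : ℂ) : eC w = w.re • eC 1 + w.im • eC Complex.I := by
  rw [← map_smul, ← map_smul, ← map_add]
  congr 1
  simp

def JC : (E2 →L[ℝ] ℝ) →L[ℝ] ℂ :=
  Complex.ofRealCLM ∘L (ContinuousLinearMap.apply ℝ ℝ (eC 1)) +
    Complex.I • (Complex.ofRealCLM ∘L (ContinuousLinearMap.apply ℝ ℝ (eC Complex.I)))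

lemma JC_apply (l : E2 →L[ℝ] ℝ) : JC l = (l (eC 1) : ℂ) + (l (eC Complex.I) : ℂ) * Complex.I := by
  simp [JC, mul_comm]

lemma JC_inj : Function.Injective JC := by
  rw [injective_iff_map_eq_zero]
  intro l hl
  rw [JC_apply] at hl
  have h1 := congrArg Complex.re hl
  have h2 := congrArg Complex.im hl
  simp at h1 h2
  ext x
  obtain ⟨w, rfl⟩ := eC.surjective x
  rw [eC_dec, map_add, map_smul, map_smul, h1, h2]; simp

lemma JC_rot (l : E2 →L[ℝ] ℝ) (t : ℝ) : JC l = Complex.exp (t * Complex.I) *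
    ((l (eC (Complex.exp (t * Complex.I))) : ℂ) +
      (l (eC (Complex.exp (t * Complex.I) * Complex.I)) : ℂ) * Complex.I) := by
  have h := Real.sin_sq_add_cos_sq t
  rw [JC_apply, eC_dec (Complex.exp (t * Complex.I)), eC_dec (Complex.exp (t * Complex.I) * Complex.I)]
  simp only [map_add, map_smul]
  apply Complex.ext
  · simp [Complex.exp_re, Complex.exp_im, Complex.cos_ofReal_re, Complex.sin_ofReal_re]
    try simp only [Complex.cos_ofReal_re, Complex.sin_ofReal_re]
    linear_combination -(l (eC 1)) * h
  · simp [Complex.exp_re, Complex.exp_im, Complex.cos_ofReal_re, Complex.sin_ofReal_re]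
    try simp only [Complex.cos_ofReal_re, Complex.sin_ofReal_re]
    linear_combination -(l (eC Complex.I)) * h

theorem stmt_9 (n : ℕ) (a : Ribbon n) (f : E2 → ℝ) (hf : IsExtension a f)
    (hnd : ∀ x ∈ critPts f, Function.Bijective (fderiv ℝ (fderiv ℝ f) x))
    (m : ℕ) (hm : (critPts f).encard = (m : ℕ∞)) :
    (1 - a.sigma / 2).natAbs ≤ m ∧ Int.ModEq 2 (m : ℤ) (1 - a.sigma / 2) := by
  obtain ⟨hsm, hfg, hbd, hrad⟩ := hf
  have hfd : Differentiable ℝ f := hsm.differentiable (by simp)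
  have hsm1 : ContDiff ℝ 1 (fderiv ℝ f) := hsm.fderiv_right (by norm_cast)
  have hfd2 : Differentiable ℝ (fderiv ℝ f) := hsm1.differentiable (by simp)
  have hfin : (critPts f).Finite := Set.finite_of_encard_eq_coe hm
  have hcard : hfin.toFinset.card = m := by
    rw [hfin.encard_eq_coe_toFinset_card] at hm; exact_mod_cast hm
  let S : Finset ℂ := hfin.toFinset.map eC.symm.toEquiv.toEmbedding
  have hScard : S.card = m := by rw [Finset.card_map, hcard]
  have hSmem : ∀ z, z ∈ S ↔ eC z ∈ critPts f := by
    intro z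
    simp only [S, Finset.mem_map, Set.Finite.mem_toFinset]
    constructor
    · rintro ⟨x, hx, rfl⟩; simpa using hx
    · intro h; exact ⟨eC z, h, by simp⟩
  let F : ℂ → ℂ := fun z => JC (fderiv ℝ f (eC z))
  have hF0 : ∀ z, F z = 0 ↔ fderiv ℝ f (eC z) = 0 := fun z => by
    rw [← map_zero JC]; exact JC_inj.eq_iff
  have hFc : Continuous F := JC.continuous.comp (hsm1.continuous.comp eC.continuous)
  obtain ⟨K, hK1, hK2, l, hl, hFl⟩ := core_s9 S F hFc
    (by
      intro s hs
      have := ((hSmem s).1 hs).1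
      rwa [mem_ball_zero_iff, LinearIsometryEquiv.norm_map] at this)
    (by
      intro z hz hzS h0
      rw [hF0] at h0
      rw [mem_closedBall_zero_iff] at hz
      rcases hz.lt_or_eq with h | h
      · exact hzS ((hSmem z).2 ⟨by rwa [mem_ball_zero_iff, LinearIsometryEquiv.norm_map], h0⟩)
      · exact hbd (eC z) (by rwa [mem_sphere_zero_iff_norm, LinearIsometryEquiv.norm_map]) h0)
    (by
      intro s hs
      have hs' := (hSmem s).1 hs
      refine ⟨(hF0 s).2 hs'.2, JC ∘L (fderiv ℝ (fderiv ℝ f) (eC s)) ∘L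
        (eC.toContinuousLinearEquiv : ℂ →L[ℝ] E2), ?_, ?_⟩
      · exact JC_inj.comp ((hnd _ hs').1.comp eC.injective)
      · exact JC.hasFDerivAt.comp s ((hfd2 (eC s)).hasFDerivAt.comp s
          eC.toContinuousLinearEquiv.hasFDerivAt))
  rw [hScard] at hK1 hK2
  let E : ℝ → ℂ := fun t => Complex.exp (t * Complex.I)
  have hEs : ∀ t, E t ∈ Metric.sphere (0:ℂ) 1 := fun t => by
    rw [mem_sphere_zero_iff_norm]; exact Complex.norm_exp_ofReal_mul_I t
  have hEc : Continuous E := by fun_prop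
  have hEper : ∀ t, E (t + 2 * Real.pi) = E t := fun t => by
    simp only [E]; push_cast; rw [add_mul, Complex.exp_add, Complex.exp_two_pi_mul_I, mul_one]
  let R : ℝ → ℝ := fun t => fderiv ℝ f (eC (E t)) (eC (E t))
  let Φ : ℝ → ℝ := fun t => ((K - 1 : ℤ) : ℝ) * t + (l (E t)).im
  let ρ : ℝ → ℝ := fun t => Real.exp (l (E t)).re
  have hlc : Continuous fun t => l (E t) :=
    hl.comp_continuous hEc hEs
  have hgT : ∀ t, HasDerivAt a.g (fderiv ℝ f (eC (E t)) (eC (E t * Complex.I))) t := by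
    intro t
    have h1 : HasDerivAt E (E t * Complex.I) t := by
      have := ((Complex.ofRealCLM.hasDerivAt (x := t)).mul_const Complex.I).cexp
      simpa using this
    have h2 : HasDerivAt (fun t => eC (E t)) (eC (E t * Complex.I)) t :=
      eC.toContinuousLinearEquiv.hasFDerivAt.comp_hasDerivAt t h1
    have h3 := (hfd (eC (E t))).hasFDerivAt.comp_hasDerivAt t h2
    have h4 : a.g = f ∘ fun t => eC (E t) := by
      funext t; rw [← hfg t, sphPt_eq]; rfl
    rw [h4]; exact h3
  have hpolar : ∀ t, (R t : ℂ) + ((deriv a.g t : ℝ) : ℂ) * Complex.I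
      = Complex.exp ((l (E t)).re + (Φ t) * Complex.I) := by
    intro t
    have h1 := JC_rot (fderiv ℝ f (eC (E t))) t
    have h2 := hFl (E t) (hEs t)
    have hE0 : E t ≠ 0 := Complex.exp_ne_zero _
    rw [(hgT t).deriv]
    apply mul_left_cancel₀ hE0
    refine h1.symm.trans (h2.trans ?_)
    simp only [E]
    rw [← Complex.exp_int_mul, ← Complex.exp_add, ← Complex.exp_add]
    congr 1
    conv_lhs => rw [← Complex.re_add_im (l _)]
    simp only [Φ, E]; push_cast; ring
  have hRe : ∀ t, R t = ρ t * Real.cos (Φ t) := by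
    intro t
    have := congrArg Complex.re (hpolar t)
    simpa [Complex.exp_re, ρ] using this
  have hIm : ∀ t, deriv a.g t = ρ t * Real.sin (Φ t) := by
    intro t
    have := congrArg Complex.im (hpolar t)
    simpa [Complex.exp_im, ρ] using this
  have hg1 : ContDiff ℝ 1 (deriv a.g) := by
    have h2 : ContDiff ℝ (1 + 1) a.g := a.smooth_g.of_le (by norm_cast)
    exact (contDiff_succ_iff_deriv.1 h2).2.2
  have hres := count a.θ a.ν (deriv a.g) R Φ ρ (fun i => deriv (deriv a.g) (a.θ i)) (K - 1)
    (by simp only [Φ]; exact (continuous_const.mul continuous_id).add (Complex.continuous_im.comp hlc))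
    (by intro t; simp only [Φ, hEper]; ring)
    (fun t => Real.exp_pos _) hIm hRe
    (by
      intro t
      rw [(hgT _).deriv, (hgT _).deriv, hEper])
    a.theta_mem a.theta_mono.injective a.nu_sign a.node_crit a.crit_only
    (fun i => (hg1.differentiable (by simp) _).hasDerivAt)
    (by
      intro i
      have hin : (inner ℝ (gradient f (sphPt (a.θ i))) (sphPt (a.θ i))) = R (a.θ i) := by
        rw [gradient, InnerProductSpace.toDual_symm_apply, sphPt_eq]
      obtain ⟨h1, h2⟩ := hrad i
      rw [hin] at h1 h2
      rcases lt_or_gt_of_ne (a.node_nondeg i) with h | h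
      · have := h1 h; nlinarith
      · have := h2 h; nlinarith)
  have hK : 1 - a.sigma / 2 = K := by
    unfold Ribbon.sigma; omega
  rw [hK]
  exact ⟨hK1, hK2⟩
end
end
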